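/- arXiv:1101.1856 — 2 statements merged into one kernel-verified Lean document; each statement's English description precedes it below -/
import Mathlib

section
/- Let X be a one-dimensional Peano continuum and let Y ⊆ X be a subcontinuum containing the union of all essential reduced loops of X (the core). Then for each x ∈ X \ Y there is a unique point r(x) ∈ Y such that every arc in X from x to any point of Y passes through r(x). -/
open Set

/-- Covering dimension at most `n`. -/
def CovDimLE (X : Type*) [TopologicalSpace X] (n : ℕ) : Prop :=
  ∀ U : Set (Set X), U.Finite → (∀ u ∈ U, IsOpen u) → ⋃₀ U = Set.univ →
    ∃ V : Set (Set X), V.Finite ∧ (∀ v ∈ V, IsOpen v) ∧ ⋃₀ V = Set.univ ∧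
      (∀ v ∈ V, ∃ u ∈ U, v ⊆ u) ∧ ∀ x : X, {v ∈ V | x ∈ v}.ncard ≤ n + 1

/-- A path is reduced if it is constant or admits no nullhomotopic subloop. -/
def IsReducedPath {X : Type*} [TopologicalSpace X] {a b : X} (α : Path a b) : Prop :=
  (∀ t, α t = a) ∨
    ¬ ∃ (s t : ℝ) (hst : s < t) (_ : 0 ≤ s) (_ : t ≤ 1) (h : α.extend s = α.extend t),
      Path.Homotopic
        ((α.truncate s t).cast (by rw [min_eq_left hst.le]; exact h.symm) rfl)
        (Path.refl (α.extend t))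

/-- The union of the images of all essential reduced loops. -/
def HomotopyCore (X : Type*) [TopologicalSpace X] : Set X :=
  ⋃ (x : X) (γ : Path x x) (_ : ¬ γ.Homotopic (Path.refl x) ∧ IsReducedPath γ),
    Set.range fun t => γ t

/-!
Two arcs from `x` that first meet `Y` in different points `p` and `q` contain together an arc from
`p` to `q` with interior outside `Y`. Removing a point `c` of that interior does not disconnect
`Y`, so by local path connectedness `p` and `q` are also joined by an arc avoiding `c`, and the two
arcs from `p` to `q` contain a simple closed curve through `c`. In dimension one such a curve lies
in the core, hence in `Y`, which contradicts `c ∉ Y`.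

A simple closed curve in a normal space `X` of covering dimension one is essential: extend its
identification with the unit circle to a map `X → ℂ` and approximate this map by one that avoids
`0`; the image of the curve then still winds once around `0`. Being simple, the curve has no proper
subloops, so it is reduced as well.

An arc inside a path `f` is obtained by passing to a minimal closed set of parameters across whose
gaps `f` takes equal values. Collapsing the gaps gives a path with interval fibers, and such a path
is an arc up to a monotone reparametrization, which is built from running maxima of Urysohn
functions.
-/

open Topology unitInterval

section NonvanishingApproximation

universe u

theorem CovDimLE.exists_partitionOfUnity {X : Type u} [TopologicalSpace X] [NormalSpace X]
    {E : Type*} [PseudoMetricSpace E] {n : ℕ} (hX : CovDimLE X n) {f : X → E} (hf : Continuous f)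
    (hbdd : TotallyBounded (range f)) {δ : ℝ} (hδ : 0 < δ) :
    ∃ (ι : Type u) (_ : Finite ι) (ρ : PartitionOfUnity ι X) (z : ι → E),
      ∀ x, (ρ.finsupport x).card ≤ n + 1 ∧ ∀ i ∈ ρ.finsupport x, z i ∈ Metric.ball (f x) δ := by
  obtain ⟨s, hs, hcover⟩ := Metric.totallyBounded_iff.1 hbdd δ hδ
  obtain ⟨V, hVfin, hVopen, hVcover, hVref, hVmult⟩ :=
    hX ((fun c => f ⁻¹' Metric.ball c δ) '' s) (hs.image _)
      (by rintro _ ⟨c, -, rfl⟩; exact Metric.isOpen_ball.preimage hf)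
      (by
        rw [sUnion_image, ← preimage_iUnion₂, ← univ_subset_iff]
        exact fun x _ => hcover (mem_range_self x))
  have : Finite V := hVfin
  have hcenter (v : V) : ∃ c, ∀ x ∈ v.1, c ∈ Metric.ball (f x) δ := by
    obtain ⟨_, ⟨c, -, rfl⟩, hvc⟩ := hVref v v.2
    exact ⟨c, fun x hx => Metric.mem_ball_comm.1 (hvc hx)⟩
  choose z hz using hcenter
  obtain ⟨ρ, hρ⟩ := PartitionOfUnity.exists_isSubordinate_of_locallyFinite isClosed_univ
    (fun v : V => v.1) (fun v => hVopen v v.2) (locallyFinite_of_finite _)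
    (by rw [← sUnion_eq_iUnion, hVcover])
  have hmem (x : X) (v : V) (hv : v ∈ ρ.finsupport x) : x ∈ v.1 :=
    hρ v (subset_tsupport _ ((ρ.mem_finsupport x).1 hv))
  refine ⟨V, this, ρ, z, fun x => ⟨?_, fun v hv => hz v x (hmem x v hv)⟩⟩
  calc (ρ.finsupport x).card
      = ((↑) '' (ρ.finsupport x : Set V) : Set (Set X)).ncard := by
        rw [ncard_image_of_injective _ Subtype.val_injective, ncard_coe_finset]
    _ ≤ {v ∈ V | x ∈ v}.ncard := by
        refine ncard_le_ncard ?_ (hVfin.subset (sep_subset _ _))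
        rintro _ ⟨v, hv, rfl⟩
        exact ⟨v.2, hmem x v hv⟩
    _ ≤ n + 1 := hVmult x

variable {E : Type*} [NormedAddCommGroup E] [NormedSpace ℝ E]

theorem dimH_convexHull_image_finset_le [FiniteDimensional ℝ E] {ι : Type*} (z : ι → E)
    {t : Finset ι} {n : ℕ} (ht : t.card ≤ n + 1) : dimH (convexHull ℝ (z '' t)) ≤ n := by
  classical
  obtain rfl | hne := t.eq_empty_or_nonempty
  · simp
  rw [Real.Convex.dimH_eq_finrank_vectorSpan (convex_convexHull ℝ _) (by simpa using hne),
    ← direction_affineSpan, affineSpan_convexHull, direction_affineSpan]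
  have hcard : t.card = (t.card - 1) + 1 := (Nat.sub_add_cancel hne.card_pos).symm
  have hrank := finrank_vectorSpan_image_finset_le ℝ z t hcard
  rw [Finset.coe_image] at hrank
  exact_mod_cast hrank.trans (by lia)

theorem dense_compl_iUnion_convexHull_image_finset [FiniteDimensional ℝ E] {ι : Type*}
    [Countable ι] (z : ι → E) {n : ℕ} (hn : n < Module.finrank ℝ E) :
    Dense (⋃ t : {t : Finset ι // t.card ≤ n + 1}, convexHull ℝ (z '' (t : Set ι)))ᶜ := by
  apply dense_compl_of_dimH_lt_finrank
  rw [dimH_iUnion]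
  exact (iSup_le fun t => dimH_convexHull_image_finset_le z t.2).trans_lt (mod_cast hn)

/- The approximation `∑ᵢ ρᵢ zᵢ` takes its values in the convex hulls of at most `n + 1` of the
points `zᵢ`. These do not fill `E`, so a small translation makes the approximation avoid `0`. -/
theorem CovDimLE.exists_continuousMap_ne_zero_dist_lt [FiniteDimensional ℝ E] {X : Type*}
    [TopologicalSpace X] [NormalSpace X] {n : ℕ} (hX : CovDimLE X n)
    (hn : n < Module.finrank ℝ E) {f : X → E} (hf : Continuous f)
    (hbdd : TotallyBounded (range f)) {ε : ℝ} (hε : 0 < ε) :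
    ∃ g : C(X, E), ∀ x, g x ≠ 0 ∧ dist (g x) (f x) < ε := by
  obtain ⟨ι, _, ρ, z, hρ⟩ := hX.exists_partitionOfUnity hf hbdd (half_pos hε)
  have hmem (x : X) {s : Set E} (hs : Convex ℝ s) (hzs : ∀ i ∈ ρ.finsupport x, z i ∈ s) :
      ∑ᶠ i, ρ i x • z i ∈ s := by
    rw [← ρ.sum_finsupport_smul_eq_finsum (x₀ := x) (fun i _ => z i)]
    exact hs.sum_mem (fun i _ => ρ.nonneg i x) (ρ.sum_finsupport (mem_univ x)) hzs
  obtain ⟨ξ, hξ, hξε⟩ := (dense_compl_iUnion_convexHull_image_finset z hn).exists_dist_lt 0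
    (half_pos hε)
  have hcont : Continuous fun x => ∑ᶠ i, ρ i x • z i :=
    ρ.continuous_finsum_smul fun i x _ => continuousAt_const
  refine ⟨⟨fun x => ∑ᶠ i, ρ i x • z i - ξ, hcont.sub continuous_const⟩, fun x => ⟨?_, ?_⟩⟩
  · refine sub_ne_zero.2 fun h => hξ (mem_iUnion.2 ⟨⟨ρ.finsupport x, (hρ x).1⟩, ?_⟩)
    exact h ▸ hmem x (convex_convexHull ℝ _) fun i hi =>
      subset_convexHull ℝ _ (mem_image_of_mem z hi)
  · have hclose : dist (∑ᶠ i, ρ i x • z i) (f x) < ε / 2 := hmem x (convex_ball _ _) (hρ x).2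
    calc dist (∑ᶠ i, ρ i x • z i - ξ) (f x)
        ≤ dist (∑ᶠ i, ρ i x • z i - ξ) (∑ᶠ i, ρ i x • z i) + dist (∑ᶠ i, ρ i x • z i) (f x) :=
          dist_triangle _ _ _
      _ = dist 0 ξ + dist (∑ᶠ i, ρ i x • z i) (f x) := by simp
      _ < ε := by linarith

end NonvanishingApproximation

section LoopsAroundZero

theorem lift_zero_eq_lift_one_of_homotopic_refl {E B : Type*} [TopologicalSpace E]
    [TopologicalSpace B] {p : E → B} (hp : IsCoveringMap p) {b : B} {γ : Path b b}
    (hγ : γ.Homotopic (Path.refl b)) {Γ : C(I, E)} (hΓ : p ∘ Γ = γ) : Γ 0 = Γ 1 := by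
  have hbase : b = p (Γ 0) := by rw [← γ.source, ← hΓ, Function.comp_apply]
  have hsource : γ.toContinuousMap 0 = p (Γ 0) := γ.source.trans hbase
  have hlift : Γ = hp.liftPath γ.toContinuousMap (Γ 0) hsource :=
    (hp.eq_liftPath_iff' hsource).2 ⟨hΓ, rfl⟩
  have hend := hp.liftPath_apply_one_eq_of_homotopicRel hγ (Γ 0) hsource hbase
  rw [← hlift] at hend
  exact (hend.trans (DFunLike.congr_fun (hp.liftPath_const hbase) 1)).symm

theorem not_homotopic_refl_of_dist_exp_lt_one {b : {z : ℂ // z ≠ 0}} (ω : Path b b)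
    (hω : ∀ t : I, dist (ω t : ℂ) (Complex.exp (2 * Real.pi * t * Complex.I)) < 1) :
    ¬ω.Homotopic (Path.refl b) := by
  let θ : C(I, ℂ) := ⟨fun t => 2 * Real.pi * t * Complex.I, by fun_prop⟩
  have hslit (t : I) : ω t * Complex.exp (-θ t) ∈ Complex.slitPlane := by
    have hnorm : ‖(ω t * Complex.exp (-θ t) : ℂ) - 1‖ < 1 := by
      calc ‖(ω t * Complex.exp (-θ t) : ℂ) - 1‖
          = ‖(ω t - Complex.exp (θ t)) * Complex.exp (-θ t)‖ := by
            rw [sub_mul, ← Complex.exp_add, add_neg_cancel, Complex.exp_zero]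
        _ = dist (ω t : ℂ) (Complex.exp (θ t)) := by
            rw [norm_mul, Complex.norm_exp, dist_eq_norm]
            simp [θ]
        _ < 1 := hω t
    simpa using Complex.mem_slitPlane_of_norm_lt_one hnorm
  let Γ : C(I, ℂ) := ⟨fun t => θ t + Complex.log (ω t * Complex.exp (-θ t)),
    θ.continuous.add (Continuous.clog (by fun_prop) hslit)⟩
  have hΓ : (fun z : ℂ => (⟨_, z.exp_ne_zero⟩ : {z : ℂ // z ≠ 0})) ∘ Γ = ω := by
    ext t
    change Complex.exp (θ t + Complex.log (ω t * Complex.exp (-θ t))) = ω t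
    rw [Complex.exp_add, Complex.exp_log (Complex.slitPlane_ne_zero (hslit t)), mul_left_comm,
      ← Complex.exp_add, add_neg_cancel, Complex.exp_zero, mul_one]
  intro hnull
  have hclosed : Γ 0 = Γ 1 :=
    lift_zero_eq_lift_one_of_homotopic_refl Complex.isCoveringMap_exp hnull hΓ
  simp [Γ, θ, Complex.exp_neg, Complex.exp_two_pi_mul_I] at hclosed

end LoopsAroundZero

/-- A loop is simple if it is injective except for the coincidence of its two ends. -/
def IsSimpleLoop {X : Type*} [TopologicalSpace X] {a : X} (γ : Path a a) : Prop :=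
  ∀ ⦃s t : I⦄, s < t → γ s = γ t → s = 0 ∧ t = 1

namespace IsSimpleLoop

variable {X : Type*} [TopologicalSpace X] {a : X} {γ : Path a a}

theorem eq_of_apply_eq (hγ : IsSimpleLoop γ) {Z : Type*} {e : I → Z} (he : e 0 = e 1) {s t : I}
    (h : γ s = γ t) : e s = e t := by
  obtain hst | rfl | hts := lt_trichotomy s t
  · obtain ⟨rfl, rfl⟩ := hγ hst h
    exact he
  · rfl
  · obtain ⟨rfl, rfl⟩ := hγ hts h.symm
    exact he.symm

theorem exists_continuousMap_range [T2Space X] (hγ : IsSimpleLoop γ) {Z : Type*}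
    [TopologicalSpace Z] (e : C(I, Z)) (he : e 0 = e 1) :
    ∃ f : C(range γ, Z), ∀ t, f ⟨γ t, mem_range_self t⟩ = e t := by
  let q : C(I, range γ) := ⟨rangeFactorization γ, by fun_prop⟩
  have hq : IsQuotientMap q :=
    q.continuous.isClosedMap.isQuotientMap q.continuous rangeFactorization_surjective
  have hfac : Function.FactorsThrough e q := fun s t h =>
    hγ.eq_of_apply_eq he (congrArg Subtype.val h)
  exact ⟨hq.lift e hfac, DFunLike.congr_fun (hq.lift_comp e hfac)⟩

theorem exists_continuousMap_eq_exp [T4Space X] (hγ : IsSimpleLoop γ) :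
    ∃ f : C(X, ℂ), (∀ x, f x ∈ Metric.closedBall 0 1) ∧
      ∀ t : I, f (γ t) = Complex.exp (2 * Real.pi * t * Complex.I) := by
  let e : C(I, ℂ) := ⟨fun t => Complex.exp (2 * Real.pi * t * Complex.I), by fun_prop⟩
  obtain ⟨f₀, hf₀⟩ := hγ.exists_continuousMap_range e (by simp [e, Complex.exp_two_pi_mul_I])
  have hball (y : range γ) : f₀ y ∈ Metric.closedBall 0 1 := by
    obtain ⟨_, t, rfl⟩ := y
    simp [hf₀, e, Complex.norm_exp]
  have := Metric.instTietzeExtensionClosedBall ℝ (0 : ℂ) one_pos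
  obtain ⟨f, hf, hfeq⟩ := f₀.exists_forall_mem_restrict_eq
    (isCompact_range γ.continuous).isClosed hball
  refine ⟨f, hf, fun t => ?_⟩
  change f (γ t) = e t
  rw [← hf₀ t, ← hfeq, ContinuousMap.restrict_apply]

theorem not_homotopic_refl [T4Space X] (hX : CovDimLE X 1) (hγ : IsSimpleLoop γ) :
    ¬γ.Homotopic (Path.refl a) := by
  obtain ⟨f, hf, hfγ⟩ := hγ.exists_continuousMap_eq_exp
  have hbdd : TotallyBounded (range f) :=
    (isCompact_closedBall 0 1).totallyBounded.subset (range_subset_iff.2 hf)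
  obtain ⟨g, hg⟩ := hX.exists_continuousMap_ne_zero_dist_lt (E := ℂ) (by simp) f.continuous hbdd
    one_pos
  let G : C(X, {z : ℂ // z ≠ 0}) := ⟨fun x => ⟨g x, (hg x).1⟩, by fun_prop⟩
  intro hnull
  refine not_homotopic_refl_of_dist_exp_lt_one (γ.map G.continuous) (fun t => ?_) (hnull.map G)
  rw [← hfγ]
  exact (hg (γ t)).2

theorem isReducedPath [T4Space X] (hX : CovDimLE X 1) (hγ : IsSimpleLoop γ) :
    IsReducedPath γ := by
  refine Or.inr ?_
  rintro ⟨s, t, hst, hs, ht, h, hnull⟩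
  have hsI : s ∈ I := ⟨hs, hst.le.trans ht⟩
  have htI : t ∈ I := ⟨hs.trans hst.le, ht⟩
  obtain ⟨rfl, rfl⟩ : s = 0 ∧ t = 1 := by
    have hst' := h
    rw [Path.extend_apply _ hsI, Path.extend_apply _ htI] at hst'
    exact (hγ (s := ⟨s, hsI⟩) (t := ⟨t, htI⟩) hst hst').imp
      (congrArg Subtype.val) (congrArg Subtype.val)
  have htruncate (u : I) : γ.truncate 0 1 u = γ u := by
    change γ.extend (min (max u 0) 1) = γ u
    rw [max_eq_left u.2.1, min_eq_left u.2.2, γ.extend_apply u.2]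
  refine not_homotopic_refl hX (fun u v huv heq => hγ huv ?_) hnull
  rw [← htruncate u, ← htruncate v]
  exact heq

theorem range_subset_homotopyCore [T4Space X] (hX : CovDimLE X 1) (hγ : IsSimpleLoop γ) :
    range γ ⊆ HomotopyCore X := fun _ hx =>
  mem_iUnion.2 ⟨a, mem_iUnion₂.2 ⟨γ, ⟨hγ.not_homotopic_refl hX, hγ.isReducedPath hX⟩, hx⟩⟩

end IsSimpleLoop

section LoopErasure

theorem isClosed_setOf_wcovBy {α : Type*} [LinearOrder α] [TopologicalSpace α]
    [OrderClosedTopology α] : IsClosed {p : α × α | p.1 ⩿ p.2} := by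
  have hEq : {p : α × α | p.1 ⩿ p.2} =
      {p | p.1 ≤ p.2} ∩ ⋂ r, {p | r ≤ p.1} ∪ {p | p.2 ≤ r} := by
    ext p
    simp [WCovBy, ← not_lt, ← imp_iff_not_or]
  rw [hEq]
  exact isClosed_le_prod.inter (isClosed_iInter fun r =>
    (isClosed_le continuous_const continuous_fst).union
      (isClosed_le continuous_snd continuous_const))

variable {X : Type*} [TopologicalSpace X]

/-- A closed set of parameters containing both ends of the interval, such that the path `f` takes
the same value at the two ends of every complementary gap. Skipping the gaps erases loops from `f`.
Consecutive points of `K` are expressed by `⩿` in the subtype `K`, which allows them to coincide. -/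
structure IsLoopErasure (f : C(I, X)) (K : Set I) : Prop where
  isClosed : IsClosed K
  zero_mem : 0 ∈ K
  one_mem : 1 ∈ K
  eq_of_wcovBy : ∀ ⦃s t : K⦄, s ⩿ t → f s = f t

namespace IsLoopErasure

variable {f : C(I, X)} {K : Set I}

theorem exists_wcovBy_mem_Icc (hK : IsLoopErasure f K) (t : I) :
    ∃ k l : K, k ⩿ l ∧ t ∈ Icc (k : I) l := by
  obtain ⟨k, ⟨hkK, hkt⟩, hk⟩ :=
    (hK.isClosed.inter isClosed_Iic).isCompact.exists_isGreatest ⟨0, hK.zero_mem, t.2.1⟩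
  obtain ⟨l, ⟨hlK, htl⟩, hl⟩ :=
    (hK.isClosed.inter isClosed_Ici).isCompact.exists_isLeast ⟨1, hK.one_mem, t.2.2⟩
  refine ⟨⟨k, hkK⟩, ⟨l, hlK⟩, ⟨(hkt.trans htl : k ≤ l), fun r hkr hrl => ?_⟩, hkt, htl⟩
  obtain hrt | htr := le_total (r : I) t
  · exact hkr.not_ge (hk ⟨r.2, hrt⟩)
  · exact hrl.not_ge (hl ⟨r.2, htr⟩)

theorem exists_mem_inter_Icc_notMem_union (hK : IsLoopErasure f K) {s t : I} (hs : s ∈ K)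
    (ht : t ∈ K) (hst : s ≤ t) {U V : Set X} (hU : IsOpen U) (hV : IsOpen V) (hUV : Disjoint U V)
    (hsU : f s ∈ U) (htV : f t ∈ V) : ∃ r ∈ K ∩ Icc s t, f r ∉ U ∪ V := by
  by_contra! hcover
  obtain ⟨a, ⟨⟨haK, haI⟩, haV⟩, ha⟩ :=
    ((hK.isClosed.inter isClosed_Icc).inter
      (hV.isClosed_compl.preimage f.continuous)).isCompact.exists_isGreatest
      ⟨s, ⟨hs, left_mem_Icc.2 hst⟩, hUV.notMem_of_mem_left hsU⟩
  obtain ⟨b, ⟨⟨hbK, hbI⟩, hbU⟩, hb⟩ :=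
    ((hK.isClosed.inter isClosed_Icc).inter
      (hU.isClosed_compl.preimage f.continuous)).isCompact.exists_isLeast
      ⟨t, ⟨ht, right_mem_Icc.2 haI.2⟩, hUV.notMem_of_mem_right htV⟩
  have hab : (⟨a, haK⟩ : K) ⩿ ⟨b, hbK⟩ := by
    refine ⟨hbI.1, fun r (har : a < r) (hrb : r < b) => ?_⟩
    have hrt : (r : I) ≤ t := hrb.le.trans hbI.2
    exact hrb.not_ge (hb ⟨⟨r.2, har.le, hrt⟩, fun hrU => har.not_ge
      (ha ⟨⟨r.2, haI.1.trans har.le, hrt⟩, hUV.notMem_of_mem_left hrU⟩)⟩)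
  have haU : f a ∈ U := (hcover a ⟨haK, haI⟩).resolve_right haV
  exact hbU (hK.eq_of_wcovBy hab ▸ haU)

theorem sInter [T2Space X] {c : Set (Set I)} (hc : ∀ K ∈ c, IsLoopErasure f K)
    (hchain : IsChain (· ⊆ ·) c) (hne : c.Nonempty) : IsLoopErasure f (⋂₀ c) where
  isClosed := isClosed_sInter fun K hK => (hc K hK).isClosed
  zero_mem := fun K hK => (hc K hK).zero_mem
  one_mem := fun K hK => (hc K hK).one_mem
  eq_of_wcovBy := by
    intro s t hst
    by_contra hne'
    obtain ⟨U, V, hU, hV, hsU, htV, hUV⟩ := t2_separation hne'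
    have := hne.to_subtype
    have hmeet (r : ⋂₀ c) (hrI : (r : I) ∈ Icc (s : I) t) : f r ∈ U ∪ V := by
      obtain h | h := hst.eq_or_eq hrI.1 hrI.2
      · exact Or.inl (h ▸ hsU)
      · exact Or.inr (h ▸ htV)
    obtain ⟨⟨L, hL⟩, hLempty⟩ := (isClosed_Icc.inter
      ((hU.union hV).isClosed_compl.preimage f.continuous)).isCompact.elim_directed_family_closed
      (fun L : c => L.1) (fun L => (hc L L.2).isClosed)
      (by
        rw [← sInter_eq_iInter, eq_empty_iff_forall_notMem]
        exact fun r ⟨⟨hrI, hrUV⟩, hr⟩ => hrUV (hmeet ⟨r, hr⟩ hrI))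
      (show IsChain (· ⊇ ·) c from hchain.symm).directedOn.directed_val
    obtain ⟨r, ⟨hrL, hrI⟩, hr⟩ := (hc L hL).exists_mem_inter_Icc_notMem_union
      (s.2 L hL) (t.2 L hL) hst.le hU hV hUV hsU htV
    exact notMem_empty r (hLempty ▸ ⟨⟨hrI, hr⟩, hrL⟩)

theorem exists_minimal [T2Space X] (f : C(I, X)) : ∃ K, Minimal (IsLoopErasure f) K := by
  have huniv : IsLoopErasure f univ :=
    ⟨isClosed_univ, mem_univ _, mem_univ _, fun s t hst => by
      by_contra hne
      have hlt : (s : I) < t := hst.le.lt_of_ne fun h => hne (by rw [h])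
      obtain ⟨r, hsr, hrt⟩ := exists_between hlt
      exact hst.2 (c := ⟨r, mem_univ r⟩) hsr hrt⟩
  refine zorn_superset {K | IsLoopErasure f K} fun c hc hchain => ?_
  obtain rfl | hne := c.eq_empty_or_nonempty
  · exact ⟨univ, huniv, fun _ h => h.elim⟩
  · exact ⟨⋂₀ c, sInter hc hchain hne, fun K hK => sInter_subset_of_mem hK⟩

theorem diff_Ioo (hK : IsLoopErasure f K) {s t : K} (h : f s = f t) :
    IsLoopErasure f (K \ Ioo s t) where
  isClosed := hK.isClosed.sdiff isOpen_Ioo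
  zero_mem := ⟨hK.zero_mem, fun h0 => h0.1.not_ge s.1.2.1⟩
  one_mem := ⟨hK.one_mem, fun h1 => h1.2.not_ge t.1.2.2⟩
  eq_of_wcovBy := by
    intro u v huv
    have hsdiff : (s : I) ∈ K \ Ioo (s : I) t := ⟨s.2, fun h => h.1.false⟩
    have htdiff : (t : I) ∈ K \ Ioo (s : I) t := ⟨t.2, fun h => h.2.false⟩
    by_cases hgap : (⟨u, u.2.1⟩ : K) ⩿ ⟨v, v.2.1⟩
    · exact hK.eq_of_wcovBy hgap
    obtain ⟨r, hur, hrv⟩ := (not_wcovBy_iff (by exact huv.le)).1 hgap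
    have hr : (r : I) ∈ Ioo (s : I) t := by
      by_contra hr
      exact huv.2 (c := ⟨r, r.2, hr⟩) hur hrv
    have hsu : (s : I) ≤ u := huv.le_of_lt (c := ⟨s, hsdiff⟩) (hr.1.trans hrv)
    have hvt : (v : I) ≤ t := huv.ge_of_gt (c := ⟨t, htdiff⟩) (lt_trans (b := (r : I)) hur hr.2)
    have hus : (u : I) ≤ s := not_lt.1 fun hlt => u.2.2 ⟨hlt, lt_trans (b := (r : I)) hur hr.2⟩
    have htv : (t : I) ≤ v := not_lt.1 fun hlt => v.2.2 ⟨hr.1.trans hrv, hlt⟩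
    rw [hus.antisymm hsu, hvt.antisymm htv, h]

theorem wcovBy_of_minimal (hK : Minimal (IsLoopErasure f) K) {s t : K} (hst : s ≤ t)
    (h : f s = f t) : s ⩿ t :=
  ⟨hst, fun r hsr hrt => (hK.2 (hK.1.diff_Ioo h) sdiff_subset r.2).2 ⟨hsr, hrt⟩⟩

theorem apply_eq_of_wcovBy_of_wcovBy (hK : IsLoopErasure f K) {k l k' l' : K} (hkl : k ⩿ l)
    (hkl' : k' ⩿ l') {t : I} (ht : t ∈ Icc (k : I) l) (ht' : t ∈ Icc (k' : I) l') :
    f k = f k' := by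
  wlog hlt : k < k' generalizing k l k' l'
  · obtain rfl | hgt := (not_lt.1 hlt).eq_or_lt
    · rfl
    · exact (this hkl' hkl ht' ht hgt).symm
  have hl : l = k' := (hkl.ge_of_gt hlt).antisymm (ht'.1.trans ht.2)
  rw [hK.eq_of_wcovBy hkl, hl]

theorem exists_continuousMap_eqOn_gaps (hK : IsLoopErasure f K) :
    ∃ h : C(I, X), ∀ ⦃k l : K⦄, k ⩿ l → ∀ t ∈ Icc (k : I) l, h t = f k := by
  let Γ : Set (I × K × K) := {p | p.2.1 ⩿ p.2.2 ∧ p.1 ∈ Icc (p.2.1 : I) p.2.2}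
  have hΓ : IsClosed Γ := (isClosed_setOf_wcovBy.preimage continuous_snd).inter
    ((isClosed_le (by fun_prop) (by fun_prop)).inter (isClosed_le (by fun_prop) (by fun_prop)))
  have := isCompact_iff_compactSpace.1 hK.isClosed.isCompact
  have := isCompact_iff_compactSpace.1 hΓ.isCompact
  let q : C(Γ, I) := ⟨fun p => p.1.1, by fun_prop⟩
  have hq : IsQuotientMap q := q.continuous.isClosedMap.isQuotientMap q.continuous fun t => by
    obtain ⟨k, l, hkl, ht⟩ := hK.exists_wcovBy_mem_Icc t
    exact ⟨⟨(t, k, l), hkl, ht⟩, rfl⟩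
  let F : C(Γ, X) := ⟨fun p => f p.1.2.1, by fun_prop⟩
  have hF : Function.FactorsThrough F q := fun p p' hp =>
    hK.apply_eq_of_wcovBy_of_wcovBy p.2.1 p'.2.1 p.2.2
      ((show p.1.1 = p'.1.1 from hp) ▸ p'.2.2)
  exact ⟨hq.lift F hF, fun k l hkl t ht =>
    DFunLike.congr_fun (hq.lift_comp F hF) ⟨(t, k, l), hkl, ht⟩⟩

end IsLoopErasure

theorem exists_continuousMap_ordConnected_fibers [T2Space X] (f : C(I, X)) :
    ∃ h : C(I, X), h 0 = f 0 ∧ h 1 = f 1 ∧ range h ⊆ range f ∧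
      ∀ x, (h ⁻¹' {x}).OrdConnected := by
  obtain ⟨K, hK⟩ := IsLoopErasure.exists_minimal f
  obtain ⟨h, hh⟩ := hK.1.exists_continuousMap_eqOn_gaps
  refine ⟨h, hh (WCovBy.refl ⟨0, hK.1.zero_mem⟩) 0 ⟨le_rfl, le_rfl⟩,
    hh (WCovBy.refl ⟨1, hK.1.one_mem⟩) 1 ⟨le_rfl, le_rfl⟩, ?_, fun x => ⟨?_⟩⟩
  · rintro _ ⟨t, rfl⟩
    obtain ⟨k, l, hkl, ht⟩ := hK.1.exists_wcovBy_mem_Icc t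
    exact ⟨k, (hh hkl t ht).symm⟩
  · rintro s rfl t hst r ⟨hsr, hrt⟩
    obtain ⟨k, l, hkl, hks, hsl⟩ := hK.1.exists_wcovBy_mem_Icc s
    obtain ⟨k', l', hkl', hkt', htl'⟩ := hK.1.exists_wcovBy_mem_Icc t
    have hfk : f k = f k' := by
      rw [← hh hkl s ⟨hks, hsl⟩, ← hh hkl' t ⟨hkt', htl'⟩, hst]
    rw [mem_preimage, mem_singleton_iff, hh hkl s ⟨hks, hsl⟩]
    obtain hrl | hlr := le_total r l
    · exact hh hkl r ⟨hks.trans hsr, hrl⟩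
    obtain hkr' | hrk' := le_total (k' : I) r
    · rw [hfk, hh hkl' r ⟨hkr', hrt.trans htl'⟩]
    · have hlk : l ⩿ k' := IsLoopErasure.wcovBy_of_minimal hK (hlr.trans hrk')
        ((hK.1.eq_of_wcovBy hkl).symm.trans hfk)
      rw [hh hlk r ⟨hlr, hrk'⟩, hK.1.eq_of_wcovBy hkl]

end LoopErasure

section Arcs

theorem exists_continuousMap_isGreatest_image_Iic {α β : Type*} [LinearOrder α]
    [TopologicalSpace α] [OrderTopology α] [CompactSpace α]
    [ConditionallyCompleteLinearOrder β] [TopologicalSpace β] [OrderTopology β] (v : C(α, β)) :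
    ∃ φ : C(α, β), ∀ r, IsGreatest (v '' Iic r) (φ r) := by
  have hcont : Continuous fun r => sSup ((fun s => v (min r s)) '' univ) :=
    isCompact_univ.continuous_sSup (f := fun r s => v (min r s)) (by fun_prop)
  have himage (r : α) : (fun s => v (min r s)) '' univ = v '' Iic r := by
    ext y
    constructor
    · rintro ⟨s, -, rfl⟩
      exact ⟨min r s, min_le_left r s, rfl⟩
    · rintro ⟨s, hs, rfl⟩
      exact ⟨s, mem_univ s, congrArg v (min_eq_right hs)⟩
  refine ⟨⟨_, hcont⟩, fun r => ?_⟩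
  change IsGreatest (v '' Iic r) (sSup ((fun s => v (min r s)) '' univ))
  rw [himage]
  exact (isClosed_Iic.isCompact.image v.continuous).isGreatest_sSup (nonempty_Iic.image v)

theorem exists_monotone_eq_iff_forall_eq {α : Type*} [LinearOrder α] [TopologicalSpace α]
    (φ : ℕ → C(α, ℝ)) (hmono : ∀ n, Monotone (φ n)) (hφ : ∀ n t, φ n t ∈ I) :
    ∃ ψ : C(α, ℝ), Monotone ψ ∧ ∀ s t, ψ s = ψ t ↔ ∀ n, φ n s = φ n t := by
  let u (n : ℕ) (t : α) : ℝ := (1 / 2) ^ n * φ n t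
  have hu_le (n : ℕ) (t : α) : ‖u n t‖ ≤ (1 / 2) ^ n := by
    rw [Real.norm_of_nonneg (mul_nonneg (by positivity) (hφ n t).1)]
    exact mul_le_of_le_one_right (by positivity) (hφ n t).2
  have hu_mono (n : ℕ) : Monotone (u n) := (hmono n).const_mul (by positivity)
  have hsum (t : α) : Summable (u · t) := summable_geometric_two.of_norm_bounded (hu_le · t)
  let ψ : C(α, ℝ) :=
    ⟨fun t => ∑' n, u n t, continuous_tsum (fun n => by fun_prop) summable_geometric_two hu_le⟩
  have hlt {s t : α} (hst : s ≤ t) {n : ℕ} (hne : φ n s ≠ φ n t) : ψ s < ψ t :=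
    (hsum s).tsum_lt_tsum (fun n => hu_mono n hst) (i := n)
      (mul_lt_mul_of_pos_left ((hmono n hst).lt_of_ne hne) (by positivity)) (hsum t)
  refine ⟨ψ, fun s t hst => (hsum s).tsum_le_tsum (fun n => hu_mono n hst) (hsum t), fun s t =>
    ⟨fun heq n => ?_, fun heq => tsum_congr fun n => congrArg ((1 / 2) ^ n * ·) (heq n)⟩⟩
  by_contra hne
  obtain hst | hts := le_total s t
  · exact (hlt hst hne).ne heq
  · exact (hlt hts (Ne.symm hne)).ne' heq

variable {X : Type*} [TopologicalSpace X] [T2Space X]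

theorem exists_monotone_lt_of_ordConnected_fibers {h : C(I, X)}
    (hfib : ∀ x, (h ⁻¹' {x}).OrdConnected) {a b : I} (hab : a ≤ b) (hne : h a ≠ h b) :
    ∃ φ : C(I, ℝ), Monotone φ ∧ (∀ t, φ t ∈ I) ∧ (∀ s t, h s = h t → φ s = φ t) ∧ φ a < φ b := by
  let q : C(I, range h) := ⟨rangeFactorization h, by fun_prop⟩
  have := isCompact_iff_compactSpace.1 (isCompact_range h.continuous)
  have hdisj : Disjoint (q '' Iic a) {q b} := by
    rw [disjoint_singleton_right]
    rintro ⟨s, hsa, hs⟩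
    have hsb : h s = h b := congrArg Subtype.val hs
    exact hne ((hfib (h b)).out hsb rfl ⟨hsa, hab⟩)
  obtain ⟨v, hv0, hv1, hvI⟩ := exists_continuous_zero_one_of_isClosed
    (isClosed_Iic.isCompact.image q.continuous).isClosed isClosed_singleton hdisj
  obtain ⟨φ, hφ⟩ := exists_continuousMap_isGreatest_image_Iic (v.comp q)
  have hmono : Monotone φ := fun r r' hr =>
    (hφ r).mono (hφ r') (image_mono (Iic_subset_Iic.2 hr))
  have hfactor {s t : I} (hst : s ≤ t) (heq : h s = h t) : φ s = φ t := by
    refine (hmono hst).antisymm ?_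
    obtain ⟨r, hrt, hr⟩ := (hφ t).1
    rw [← hr]
    obtain hrs | hsr := le_total r s
    · exact (hφ s).2 ⟨r, hrs, rfl⟩
    · have hrs : h r = h s := (hfib (h s)).out rfl heq.symm ⟨hsr, hrt⟩
      exact (hφ s).2 ⟨s, self_mem_Iic, congrArg v (Subtype.ext hrs.symm)⟩
  refine ⟨φ, hmono, fun t => ?_, fun s t heq => ?_, ?_⟩
  · obtain ⟨r, -, hr⟩ := (hφ t).1
    exact hr ▸ hvI (q r)
  · obtain hst | hts := le_total s t
    · exact hfactor hst heq
    · exact (hfactor hts heq.symm).symm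
  · obtain ⟨r, hra, hr⟩ := (hφ a).1
    calc φ a = v (q r) := hr.symm
      _ = 0 := hv0 (mem_image_of_mem q hra)
      _ < 1 := one_pos
      _ = v (q b) := (hv1 rfl).symm
      _ ≤ φ b := (hφ b).2 ⟨b, self_mem_Iic, rfl⟩

theorem exists_lt_lt_lt_apply_ne {h : C(I, X)} {s t : I} (hst : s < t) (hne : h s ≠ h t) :
    ∃ p : I × I, s < p.1 ∧ p.1 < p.2 ∧ p.2 < t ∧ h p.1 ≠ h p.2 := by
  by_contra! hconst
  obtain ⟨m, hm⟩ := exists_between hst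
  have hEqOn : EqOn h (fun _ => h m) (Ioo s t) := by
    intro r hr
    obtain hrm | rfl | hmr := lt_trichotomy r m
    · exact hconst (r, m) hr.1 hrm hm.2
    · rfl
    · exact (hconst (m, r) hm.1 hmr hr.2).symm
  have hEqOn' := hEqOn.closure h.continuous continuous_const
  rw [closure_Ioo hst.ne] at hEqOn'
  exact hne ((hEqOn' (left_mem_Icc.2 hst.le)).trans (hEqOn' (right_mem_Icc.2 hst.le)).symm)

theorem exists_monotone_eq_iff_of_ordConnected_fibers {h : C(I, X)}
    (hfib : ∀ x, (h ⁻¹' {x}).OrdConnected) :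
    ∃ ψ : C(I, ℝ), Monotone ψ ∧ ∀ s t, ψ s = ψ t ↔ h s = h t := by
  have hsep (p : I × I) : ∃ φ : C(I, ℝ), Monotone φ ∧ (∀ t, φ t ∈ I) ∧
      (∀ s t, h s = h t → φ s = φ t) ∧ (p.1 ≤ p.2 → h p.1 ≠ h p.2 → φ p.1 < φ p.2) := by
    by_cases hp : p.1 ≤ p.2 ∧ h p.1 ≠ h p.2
    · obtain ⟨φ, hmono, hI, hfactor, hlt⟩ :=
        exists_monotone_lt_of_ordConnected_fibers hfib hp.1 hp.2
      exact ⟨φ, hmono, hI, hfactor, fun _ _ => hlt⟩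
    · exact ⟨0, monotone_const, fun _ => ⟨le_rfl, zero_le_one⟩, fun _ _ _ => rfl,
        fun hle hne => (hp ⟨hle, hne⟩).elim⟩
  choose φ hmono hI hfactor hlt using hsep
  obtain ⟨ψ, hψmono, hψ⟩ := exists_monotone_eq_iff_forall_eq
    (fun n => φ (TopologicalSpace.denseSeq (I × I) n)) (fun n => hmono _) (fun n => hI _)
  have hne_of_lt {s t : I} (hst : s < t) (hne : h s ≠ h t) : ψ s ≠ ψ t := by
    have hopen : IsOpen {p : I × I | s < p.1 ∧ p.1 < p.2 ∧ p.2 < t ∧ h p.1 ≠ h p.2} :=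
      (isOpen_lt (by fun_prop) (by fun_prop)).inter <|
        (isOpen_lt (by fun_prop) (by fun_prop)).inter <|
          (isOpen_lt (by fun_prop) (by fun_prop)).inter <|
            isOpen_ne_fun (by fun_prop) (by fun_prop)
    obtain ⟨n, hsn, hn, hnt, hne'⟩ :=
      (TopologicalSpace.denseRange_denseSeq (I × I)).exists_mem_open hopen
        (exists_lt_lt_lt_apply_ne hst hne)
    refine fun heq => ((hψ s t).1 heq n).not_lt ?_
    calc φ _ s ≤ φ _ _ := hmono _ hsn.le
      _ < φ _ _ := hlt _ hn.le hne'
      _ ≤ φ _ t := hmono _ hnt.le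
  refine ⟨ψ, hψmono, fun s t => ⟨not_imp_not.1 fun hne => ?_, fun heq =>
    (hψ s t).2 fun n => hfactor _ s t heq⟩⟩
  obtain hst | rfl | hts := lt_trichotomy s t
  · exact hne_of_lt hst hne
  · exact (hne rfl).elim
  · exact (hne_of_lt hts (Ne.symm hne)).symm

theorem exists_injective_path_of_ordConnected_fibers {h : C(I, X)}
    (hfib : ∀ x, (h ⁻¹' {x}).OrdConnected) (hne : h 0 ≠ h 1) :
    ∃ γ : Path (h 0) (h 1), Function.Injective γ ∧ range γ ⊆ range h := by
  obtain ⟨ψ, hmono, hψ⟩ := exists_monotone_eq_iff_of_ordConnected_fibers hfib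
  have hlt : ψ 0 < ψ 1 := (hmono zero_le_one).lt_of_ne (mt (hψ 0 1).1 hne)
  have hψ_mem (t : I) : ψ t ∈ Icc (ψ 0) (ψ 1) := ⟨hmono t.2.1, hmono t.2.2⟩
  let e := iccHomeoI (ψ 0) (ψ 1) hlt
  let q : C(I, I) := ⟨fun t => e ⟨ψ t, hψ_mem t⟩, by fun_prop⟩
  have hq (s t : I) : q s = q t ↔ h s = h t := by
    rw [← hψ]
    exact e.injective.eq_iff.trans Subtype.mk_eq_mk
  have hq_surj : Function.Surjective q := fun r => by
    obtain ⟨t, ht⟩ := mem_range_of_exists_le_of_exists_ge ψ.continuous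
      ⟨0, (e.symm r).2.1⟩ ⟨1, (e.symm r).2.2⟩
    exact ⟨t, (e.symm_apply_eq.1 (Subtype.ext ht.symm)).symm⟩
  have hquot : IsQuotientMap q := q.continuous.isClosedMap.isQuotientMap q.continuous hq_surj
  have hfac : Function.FactorsThrough h q := fun s t => (hq s t).1
  let g := hquot.lift h hfac
  have hg (t : I) : g (q t) = h t := DFunLike.congr_fun (hquot.lift_comp h hfac) t
  have hq0 : q 0 = 0 := by ext; simp [q, e]
  have hq1 : q 1 = 1 := by ext; simp [q, e, sub_ne_zero.2 hlt.ne']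
  refine ⟨⟨g, by simpa [hq0] using hg 0, by simpa [hq1] using hg 1⟩, ?_, ?_⟩
  · intro r r' hrr'
    obtain ⟨⟨s, rfl⟩, ⟨t, rfl⟩⟩ := hq_surj r, hq_surj r'
    exact (hq s t).2 (by rwa [← hg, ← hg])
  · rintro _ ⟨r, rfl⟩
    obtain ⟨t, rfl⟩ := hq_surj r
    exact ⟨t, (hg t).symm⟩

theorem exists_injective_path_range_subset {a b : X} (hab : a ≠ b) (f : Path a b) :
    ∃ γ : Path a b, Function.Injective γ ∧ range γ ⊆ range f := by
  obtain ⟨h, h0, h1, hrange, hfib⟩ := exists_continuousMap_ordConnected_fibers f.toContinuousMap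
  replace h0 : h 0 = a := h0.trans f.source
  replace h1 : h 1 = b := h1.trans f.target
  subst h0 h1
  obtain ⟨γ, hinj, hγ⟩ := exists_injective_path_of_ordConnected_fibers hfib hab
  exact ⟨γ, hinj, hγ.trans hrange⟩

end Arcs

section LocallyPathConnected

variable {X : Type*} [MetricSpace X] {U V : Set X} {ε δ : ℝ} {x y : X} {u : ℝ → X}

/-- Concatenation of two maps, meant for maps on `[0, 1]`: `u` is run on `[0, 1 / 2]` and `v` on
`[1 / 2, 1]`. -/
noncomputable def concatHalves (u v : ℝ → X) : ℝ → X :=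
  fun t => if t ≤ 1 / 2 then u (2 * t) else v (2 * t - 1)

/-- `IsLinkChain U ε x y u` means that `u` jumps from `x` to `y` through finitely many points of
`U`, any two consecutive ones lying in a common connected open subset of `U` of small diameter.
The jumps of such a map can be filled in by chains of smaller jumps, so these maps are the
approximations whose limit is a path from `x` to `y`. -/
inductive IsLinkChain (U : Set X) (ε : ℝ) : X → X → (ℝ → X) → Prop
  | link {V : Set X} {x y : X} (isOpen : IsOpen V) (isPreconnected : IsPreconnected V)
      (subset : V ⊆ U) (dist_lt : ∀ p ∈ V, ∀ q ∈ V, dist p q < ε) (left_mem : x ∈ V)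
      (right_mem : y ∈ V) : IsLinkChain U ε x y fun t => if t ≤ 0 then x else y
  | concat {x y z : X} {u v : ℝ → X} (left : IsLinkChain U ε x y u)
      (right : IsLinkChain U ε y z v) : IsLinkChain U ε x z (concatHalves u v)

namespace IsLinkChain

theorem apply_zero (h : IsLinkChain U ε x y u) : u 0 = x := by
  induction h with
  | link => simp
  | concat _ _ ih _ => simpa [concatHalves] using ih

theorem apply_one (h : IsLinkChain U ε x y u) : u 1 = y := by
  induction h with
  | link => simp
  | concat _ _ _ ih => norm_num [concatHalves, ih]

theorem mem (h : IsLinkChain U ε x y u) (t : ℝ) : u t ∈ U := by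
  induction h generalizing t with
  | link _ _ subset _ left_mem right_mem =>
    dsimp only
    split_ifs
    exacts [subset left_mem, subset right_mem]
  | concat _ _ ihu ihv =>
    unfold concatHalves
    split_ifs
    exacts [ihu _, ihv _]

theorem mono (h : IsLinkChain U ε x y u) (hUV : U ⊆ V) : IsLinkChain V ε x y u := by
  induction h with
  | link isOpen isPreconnected subset dist_lt left_mem right_mem =>
    exact link isOpen isPreconnected (subset.trans hUV) dist_lt left_mem right_mem
  | concat _ _ ihu ihv => exact ihu.concat ihv

theorem eventually_dist_lt (h : IsLinkChain U ε x y u) (t : ℝ) :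
    ∀ᶠ s in 𝓝 t, dist (u s) (u t) < ε := by
  induction h generalizing t with
  | link _ _ _ dist_lt left_mem right_mem =>
    refine .of_forall fun s => dist_lt _ ?_ _ ?_ <;> dsimp only <;> split_ifs <;> assumption
  | @concat _ _ _ u v hu hv ihu ihv =>
    have tendsto_left : Filter.Tendsto (fun s : ℝ => 2 * s) (𝓝 t) (𝓝 (2 * t)) :=
      (by fun_prop : Continuous fun s : ℝ => 2 * s).tendsto t
    have tendsto_right : Filter.Tendsto (fun s : ℝ => 2 * s - 1) (𝓝 t) (𝓝 (2 * t - 1)) :=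
      (by fun_prop : Continuous fun s : ℝ => 2 * s - 1).tendsto t
    have near_left := tendsto_left.eventually (ihu (2 * t))
    have near_right := tendsto_right.eventually (ihv (2 * t - 1))
    have apply_half : u 1 = v 0 := hu.apply_one.trans hv.apply_zero.symm
    unfold concatHalves
    rcases lt_trichotomy t (1 / 2) with ht | rfl | ht
    · filter_upwards [near_left, eventually_lt_nhds ht] with s hs hst
      rwa [if_pos hst.le, if_pos ht.le]
    · norm_num at near_left near_right ⊢
      filter_upwards [near_left, near_right] with s hs hs'
      split_ifs
      exacts [hs, apply_half ▸ hs']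
    · filter_upwards [near_right, eventually_gt_nhds ht] with s hs hst
      rwa [if_neg hst.not_ge, if_neg ht.not_ge]

variable [LocallyConnectedSpace X]

theorem exists_of_isPreconnected (hUo : IsOpen U) (hU : IsPreconnected U) (hε : 0 < ε)
    (hx : x ∈ U) (hy : y ∈ U) : ∃ u, IsLinkChain U ε x y u := by
  refine hU.induction₂' (fun x y => ∃ u, IsLinkChain U ε x y u) (fun z hz => ?_) ?_ hx hy
  · obtain ⟨V, hVsub, hVo, hzV, hV⟩ := locallyConnectedSpace_iff_subsets_isOpen_isConnected.1 ‹_› z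
      (U ∩ Metric.ball z (ε / 2)) (Filter.inter_mem (hUo.mem_nhds hz)
        (Metric.ball_mem_nhds z (half_pos hε)))
    have dist_lt : ∀ p ∈ V, ∀ q ∈ V, dist p q < ε := fun p hp q hq => by
      linarith [dist_triangle_right p q z, Metric.mem_ball.1 (hVsub hp).2,
        Metric.mem_ball.1 (hVsub hq).2]
    have hVU : V ⊆ U := fun p hp => (hVsub hp).1
    filter_upwards [mem_nhdsWithin_of_mem_nhds (hVo.mem_nhds hzV)] with w hw
    exact ⟨⟨_, link hVo hV.isPreconnected hVU dist_lt hzV hw⟩,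
      ⟨_, link hVo hV.isPreconnected hVU dist_lt hw hzV⟩⟩
  · rintro x y z - - - ⟨u, hu⟩ ⟨v, hv⟩
    exact ⟨_, hu.concat hv⟩

theorem exists_refinement (h : IsLinkChain U ε x y u) (hδ : 0 < δ) :
    ∃ v, IsLinkChain U δ x y v ∧ ∀ t, dist (u t) (v t) < ε := by
  induction h with
  | @link V x y isOpen isPreconnected subset dist_lt left_mem right_mem =>
    obtain ⟨v, hv⟩ := exists_of_isPreconnected isOpen isPreconnected hδ left_mem right_mem
    refine ⟨v, hv.mono subset, fun t => dist_lt _ ?_ _ (hv.mem t)⟩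
    dsimp only
    split_ifs <;> assumption
  | concat _ _ ihu ihv =>
    obtain ⟨u', hu', huu'⟩ := ihu
    obtain ⟨v', hv', hvv'⟩ := ihv
    refine ⟨_, hu'.concat hv', fun t => ?_⟩
    unfold concatHalves
    split_ifs
    exacts [huu' _, hvv' _]

theorem exists_seq (h : IsLinkChain U 1 x y u) :
    ∃ w : ℕ → ℝ → X, (∀ k, IsLinkChain U ((1 / 2) ^ k) x y (w k)) ∧
      ∀ k t, dist (w k t) (w (k + 1) t) < (1 / 2) ^ k := by
  choose! refine isLinkChain_refine dist_refine using
    fun (k : ℕ) u (hu : IsLinkChain U ((1 / 2) ^ k) x y u) =>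
      hu.exists_refinement (δ := (1 / 2) ^ (k + 1)) (by positivity)
  let w : ℕ → ℝ → X := fun k => k.rec u refine
  have isLinkChain_w : ∀ k, IsLinkChain U ((1 / 2) ^ k) x y (w k) := fun k => by
    induction k with
    | zero => rwa [pow_zero]
    | succ k ih => exact isLinkChain_refine k _ ih
  exact ⟨w, isLinkChain_w, fun k => dist_refine k _ (isLinkChain_w k)⟩

end IsLinkChain

theorem exists_continuous_tendsto_of_dist_le_geometric {S : Type*} [TopologicalSpace S]
    [CompleteSpace X] {w : ℕ → S → X} (hdist : ∀ k t, dist (w k t) (w (k + 1) t) < (1 / 2) ^ k)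
    (hosc : ∀ k t, ∀ᶠ s in 𝓝 t, dist (w k s) (w k t) < (1 / 2) ^ k) :
    ∃ g : S → X, Continuous g ∧ ∀ t, Filter.Tendsto (w · t) Filter.atTop (𝓝 (g t)) := by
  have hdist' : ∀ t k, dist (w k t) (w (k + 1) t) ≤ 1 * (1 / 2) ^ k := fun t k => by
    simpa using (hdist k t).le
  choose g hg using fun t => cauchySeq_tendsto_of_complete
    (cauchySeq_of_le_geometric _ _ one_half_lt_one (hdist' t))
  have dist_g : ∀ k t, dist (w k t) (g t) ≤ 2 * (1 / 2) ^ k := fun k t => by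
    refine (dist_le_of_le_geometric_of_tendsto _ _ one_half_lt_one (hdist' t) (hg t) k).trans_eq ?_
    ring
  refine ⟨g, continuous_iff_continuousAt.2 fun t => Metric.tendsto_nhds.2 fun ε hε => ?_, hg⟩
  obtain ⟨k, hk⟩ := exists_pow_lt_of_lt_one (show 0 < ε / 5 by positivity) one_half_lt_one
  filter_upwards [hosc k t] with s hs
  linarith [dist_triangle4_left (w k s) (w k t) (g s) (g t), dist_g k s, dist_g k t]

theorem joinedIn_closure_of_isPreconnected [CompleteSpace X] [LocallyConnectedSpace X]
    (hUo : IsOpen U) (hU : IsPreconnected U) (hx : x ∈ U) (hy : y ∈ U) :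
    JoinedIn (closure U) x y := by
  obtain ⟨u, hu⟩ := IsLinkChain.exists_of_isPreconnected hUo hU one_pos hx hy
  obtain ⟨w, hw, dist_w⟩ := hu.exists_seq
  obtain ⟨g, hg, tendsto_g⟩ := exists_continuous_tendsto_of_dist_le_geometric dist_w
    fun k => (hw k).eventually_dist_lt
  have g_zero : g 0 = x := tendsto_nhds_unique (tendsto_g 0) (by simp [(hw _).apply_zero])
  have g_one : g 1 = y := tendsto_nhds_unique (tendsto_g 1) (by simp [(hw _).apply_one])
  refine ⟨⟨⟨fun t => g t, by fun_prop⟩, by simpa using g_zero, by simpa using g_one⟩, fun t => ?_⟩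
  exact mem_closure_of_tendsto (tendsto_g t) (.of_forall fun k => (hw k).mem t)

theorem locallyPathConnectedSpace_of_locallyConnectedSpace [CompleteSpace X]
    [LocallyConnectedSpace X] : LocallyPathConnectedSpace X := by
  refine locallyPathConnectedSpace_iff_pathComponentIn_mem_nhds.2 fun x W hW hxW => ?_
  obtain ⟨K, hK, hKcl, hKW⟩ := exists_mem_nhds_isClosed_subset (hW.mem_nhds hxW)
  obtain ⟨V, hVK, hVo, hxV, hV⟩ :=
    locallyConnectedSpace_iff_subsets_isOpen_isConnected.1 ‹_› x K hK
  filter_upwards [hVo.mem_nhds hxV] with y hy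
  exact (joinedIn_closure_of_isPreconnected hVo hV.isPreconnected hxV hy).mono
    ((closure_minimal hVK hKcl).trans hKW)

end LocallyPathConnected

section FirstPoint

variable {X : Type*} [TopologicalSpace X] {Y : Set X} {a b x y p q : X}

theorem injective_subpath {γ : Path a b} (hγ : Function.Injective γ) {s t : I} (hst : s ≠ t) :
    Function.Injective (γ.subpath s t) := by
  refine hγ.comp fun r r' hrr' => Subtype.ext ?_
  have hconv : (1 - r) * s + r * t = (1 - r') * s + r' * (t : ℝ) := congrArg Subtype.val hrr'
  have hts : (t - s : ℝ) ≠ 0 := sub_ne_zero.2 fun h => hst (Subtype.ext h.symm)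
  exact mul_right_cancel₀ hts (by linarith)

theorem isSimpleLoop_trans {α : Path a b} {β : Path b a} (hα : Function.Injective α)
    (hβ : Function.Injective β) (hαβ : range α ∩ range β ⊆ {a, b}) :
    IsSimpleLoop (α.trans β) := by
  intro s t hst h
  have hst' : (s : ℝ) < t := hst
  simp only [Path.trans_apply] at h
  split_ifs at h with hs ht
  · have := congrArg Subtype.val (hα h)
    dsimp only at this
    linarith
  · obtain hend | hend := hαβ ⟨mem_range_self _, _, h.symm⟩
    · have hs0 := congrArg Subtype.val (hα (hend.trans α.source.symm))
      have ht1 := congrArg Subtype.val (hβ ((h.symm.trans hend).trans β.target.symm))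
      dsimp only [Icc.coe_zero, Icc.coe_one] at hs0 ht1
      exact ⟨Icc.coe_eq_zero.1 (by linarith), Icc.coe_eq_one.1 (by linarith)⟩
    · have ht0 := congrArg Subtype.val (hβ ((h.symm.trans hend).trans β.source.symm))
      dsimp only [Icc.coe_zero] at ht0
      linarith
  · linarith
  · have := congrArg Subtype.val (hβ h)
    dsimp only at this
    linarith

theorem exists_isSimpleLoop_mem_range [T2Space X] {γ : Path a b} {η : Path p q}
    (hγ : Function.Injective γ) (hη : Function.Injective η) (ha : a ∈ range η) (hb : b ∈ range η)
    {c : I} (hc : γ c ∉ range η) :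
    ∃ (z : X) (ω : Path z z), IsSimpleLoop ω ∧ γ c ∈ range ω := by
  have hclosed : IsClosed (γ ⁻¹' range η) :=
    (isCompact_range η.continuous).isClosed.preimage γ.continuous
  obtain ⟨u, ⟨⟨u', hu'⟩, huc⟩, hu⟩ :=
    (hclosed.inter (isClosed_Iic (a := c))).isCompact.exists_isGreatest
      ⟨0, by simpa using ha, nonneg'⟩
  obtain ⟨v, ⟨⟨v', hv'⟩, hcv⟩, hv⟩ :=
    (hclosed.inter (isClosed_Ici (a := c))).isCompact.exists_isLeast
      ⟨1, by simpa using hb, le_one'⟩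
  have huv : u ≠ v := by
    rintro rfl
    exact hc ⟨u', hu'.trans (congrArg γ (le_antisymm huc hcv))⟩
  have huv' : v' ≠ u' := by
    rintro rfl
    exact huv (hγ (hu'.symm.trans hv'))
  refine ⟨γ u, (γ.subpath u v).trans ((η.subpath v' u').cast hv'.symm hu'.symm),
    isSimpleLoop_trans (injective_subpath hγ huv) (injective_subpath hη huv') ?_, ?_⟩
  · rw [γ.range_subpath_of_le u v (huc.trans hcv)]
    rintro _ ⟨⟨t, ⟨hut, htv⟩, rfl⟩, ⟨r, hr⟩⟩
    have htη : γ t ∈ range η := ⟨_, hr⟩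
    obtain htc | hct := le_total t c
    · exact .inl (congrArg γ (le_antisymm (hu ⟨htη, htc⟩) hut))
    · exact .inr (congrArg γ (le_antisymm htv (hv ⟨htη, hct⟩)))
  · rw [Path.trans_range, γ.range_subpath_of_le u v (huc.trans hcv)]
    exact .inl ⟨c, ⟨huc, hcv⟩, rfl⟩

theorem joinedIn_of_isPreconnected_subset_isOpen [LocallyPathConnectedSpace X] {U : Set X}
    (hU : IsOpen U) (hY : IsPreconnected Y) (hYU : Y ⊆ U) (hp : p ∈ Y) (hq : q ∈ Y) :
    JoinedIn U p q := by
  have hcomp : IsPathConnected (connectedComponentIn U p) :=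
    (hU.connectedComponentIn.isConnected_iff_isPathConnected).1
      (isConnected_connectedComponentIn_iff.2 (hYU hp))
  exact (hcomp.joinedIn _ (mem_connectedComponentIn (hYU hp)) _
    (hY.subset_connectedComponentIn hp hYU hq)).mono (connectedComponentIn_subset U p)

theorem eq_of_forall_mem_eq_of_isSimpleLoop_subset [T2Space X]
    [LocallyPathConnectedSpace X] (hY : IsPreconnected Y)
    (hloop : ∀ (z : X) (ω : Path z z), IsSimpleLoop ω → range ω ⊆ Y) {α : Path x p} {β : Path x q}
    (hp : p ∈ Y) (hq : q ∈ Y) (hα : ∀ t, α t ∈ Y → α t = p) (hβ : ∀ t, β t ∈ Y → β t = q) :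
    p = q := by
  by_contra hpq
  obtain ⟨γ, hγ, hγsub⟩ := exists_injective_path_range_subset hpq (α.symm.trans β)
  rw [Path.trans_range, Path.symm_range] at hγsub
  obtain ⟨c, hc0, hc1⟩ := exists_between (zero_lt_one (α := I))
  have hcY : γ c ∉ Y := fun hc => by
    obtain ⟨t, ht⟩ | ⟨t, ht⟩ := hγsub (mem_range_self c)
    · exact hc0.ne' (hγ ((ht.symm.trans (hα t (ht ▸ hc))).trans γ.source.symm))
    · exact hc1.ne (hγ ((ht.symm.trans (hβ t (ht ▸ hc))).trans γ.target.symm))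
  obtain ⟨η₀, hη₀⟩ := joinedIn_of_isPreconnected_subset_isOpen isOpen_compl_singleton hY
    (subset_compl_singleton_iff.2 hcY) hp hq
  obtain ⟨η, hη, hηsub⟩ := exists_injective_path_range_subset hpq η₀
  have hcη : γ c ∉ range η := fun hc => by
    obtain ⟨t, ht⟩ := hηsub hc
    exact hη₀ t ht
  obtain ⟨z, ω, hω, hcω⟩ :=
    exists_isSimpleLoop_mem_range hγ hη ⟨0, η.source⟩ ⟨1, η.target⟩ hcη
  exact hcY (hloop z ω hω hcω)

theorem exists_injective_path_forall_mem_eq (hY : IsClosed Y) (hx : x ∉ Y) (hy : y ∈ Y)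
    {γ : Path x y} (hγ : Function.Injective γ) :
    ∃ p ∈ Y, ∃ α : Path x p, Function.Injective α ∧ range α ⊆ range γ ∧
      ∀ t, α t ∈ Y → α t = p := by
  obtain ⟨t₀, ht₀, hmin⟩ :=
    (hY.preimage γ.continuous).isCompact.exists_isLeast ⟨1, by simpa using hy⟩
  have ht₀_ne : 0 ≠ t₀ := by
    rintro rfl
    exact hx (by simpa using ht₀)
  have hrange := γ.range_subpath_of_le 0 t₀ nonneg'
  refine ⟨γ t₀, ht₀, (γ.subpath 0 t₀).cast γ.source.symm rfl, injective_subpath hγ ht₀_ne,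
    hrange.trans_subset (image_subset_range _ _), fun t ht => ?_⟩
  obtain ⟨r, ⟨-, hr⟩, hrt⟩ := hrange.subset (mem_range_self t)
  rw [Path.cast_coe, ← hrt] at ht ⊢
  rw [le_antisymm hr (hmin ht)]

theorem existsUnique_mem_forall_injective_path [T2Space X] [ConnectedSpace X]
    [LocallyPathConnectedSpace X] (hYclosed : IsClosed Y) (hYconn : IsConnected Y)
    (hloop : ∀ (z : X) (ω : Path z z), IsSimpleLoop ω → range ω ⊆ Y) (hx : x ∉ Y) :
    ∃! p, p ∈ Y ∧ ∀ y ∈ Y, ∀ γ : Path x y, Function.Injective γ → p ∈ range γ := by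
  have : PathConnectedSpace X := pathConnectedSpace_iff_connectedSpace.2 ‹_›
  obtain ⟨y₀, hy₀⟩ := hYconn.nonempty
  obtain ⟨γ₀, hγ₀, -⟩ := exists_injective_path_range_subset (ne_of_mem_of_not_mem hy₀ hx).symm
    (PathConnectedSpace.somePath x y₀)
  obtain ⟨p, hp, α, hαinj, -, hα⟩ := exists_injective_path_forall_mem_eq hYclosed hx hy₀ hγ₀
  refine ⟨p, ⟨hp, fun y hy γ hγ => ?_⟩, fun p' ⟨hp', hmem⟩ => ?_⟩
  · obtain ⟨q, hq, β, -, hβγ, hβ⟩ := exists_injective_path_forall_mem_eq hYclosed hx hy hγ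
    rw [eq_of_forall_mem_eq_of_isSimpleLoop_subset hYconn.isPreconnected hloop hp hq hα hβ]
    exact hβγ ⟨1, β.target⟩
  · obtain ⟨t, rfl⟩ := hmem p hp α hαinj
    exact hα t hp'

end FirstPoint

theorem stmt_7_general {X : Type*} [TopologicalSpace X] [T4Space X] [ConnectedSpace X]
    [LocallyPathConnectedSpace X] (hdim : CovDimLE X 1) {Y : Set X} (hYclosed : IsClosed Y)
    (hYconn : IsConnected Y) (hcore : HomotopyCore X ⊆ Y) {x : X} (hx : x ∉ Y) :
    ∃! p, p ∈ Y ∧ ∀ y ∈ Y, ∀ γ : Path x y, Function.Injective γ → p ∈ range γ :=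
  existsUnique_mem_forall_injective_path hYclosed hYconn
    (fun _ _ hω => (hω.range_subset_homotopyCore hdim).trans hcore) hx

/-- First point lemma: unique point of `Y` through which every arc from `x` to `Y` passes. -/
theorem stmt_7 {X : Type} [MetricSpace X] [CompactSpace X] [ConnectedSpace X]
    [LocallyConnectedSpace X] (hdim : CovDimLE X 1)
    (Y : Set X) (hYcpt : IsCompact Y) (hYconn : IsConnected Y)
    (hcore : HomotopyCore X ⊆ Y) (x : X) (hx : x ∉ Y) :
    ∃! p : X, p ∈ Y ∧ ∀ y : X, y ∈ Y → ∀ γ : Path x y,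
      Function.Injective (fun t => γ t) → p ∈ Set.range fun t => γ t := by
  have := locallyPathConnectedSpace_of_locallyConnectedSpace (X := X)
  exact stmt_7_general hdim hYcpt.isClosed hYconn hcore hx
end

section
/- In a one-dimensional metric space X, every path α : [0,1] → X is homotopic relative endpoints to a reduced path whose image is contained in the image of α; moreover, this reduced path is unique up to reparametrization of [0,1]. -/
/-!
A path in a one-dimensional space factors through a tree in which nullhomotopic subloops close up.
To find the tree, choose a fine finite cover of order at most two. Labeling each point by a member
of the cover turns a path into a walk; since only two labels occur near any point, the walk with
its backtracking cancelled depends, as for a covering space, only on the homotopy class of the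
path. Hence a parameter `t` of `α` carries a reduced walk that has the same value at the two ends
of a nullhomotopic subloop. Measuring the length of these walks by elapsed time, discounted by the
fineness of the cover, gives an approximate height function on the parameter interval, and an
ultralimit over finer and finer covers gives a height function `h` that is the contour of a tree
through which `α` factors.

In the tree, a path is homotopic to the monotone climb between its endpoints. Applied to `α` this
gives the reduced path: a nullhomotopic subloop of the climb would start and end at the same height.
If `β` and `β'` are nonconstant, reduced and homotopic, take the tree of the loop `β * β'⁻¹`. The
height is strictly monotone along both paths, they climb to the same top, and so they run through
the same points of the tree: comparing heights is the reparametrization.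
-/

open Set

open Filter Topology unitInterval

section ReducedWalks

variable {A : Type*} {l : List A} {x y z : A}

open Classical in
/-- One step of a walk with cancellation of backtracking. A walk is stored as the list of its
vertices, the current one first; moving on to `v` returns to the previous vertex if that is `v`. -/
noncomputable def walkStep (l : List A) (v : A) : List A :=
  if l.head? = some v then l else if l.tail.head? = some v then l.tail else v :: l

/-- A walk, stored as the list of its vertices, is reduced if it neither stays at a vertex nor
backtracks. -/
def IsReducedWalk : List A → Prop
  | [] => True
  | a :: l => a ∉ l.take 2 ∧ IsReducedWalk l

lemma isReducedWalk_singleton (x : A) : IsReducedWalk [x] := by simp [IsReducedWalk]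

lemma walkStep_of_head?_eq (h : l.head? = some x) : walkStep l x = l := if_pos h

lemma walkStep_eq_self_or_tail_or_cons (l : List A) (x : A) :
    walkStep l x = l ∨ walkStep l x = l.tail ∨ walkStep l x = x :: l := by
  grind [walkStep]

lemma head?_walkStep (l : List A) (x : A) : (walkStep l x).head? = some x := by
  grind [walkStep]

lemma isReducedWalk_walkStep (h : IsReducedWalk l) (x : A) : IsReducedWalk (walkStep l x) := by
  rcases l with _ | ⟨a, _ | ⟨b, l⟩⟩ <;> simp only [walkStep] <;> grind [IsReducedWalk]

lemma walkStep_walkStep_cancel (h : IsReducedWalk l) (hx : l.head? = some x) (y : A) :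
    walkStep (walkStep l y) x = l := by
  rcases l with _ | ⟨a, _ | ⟨b, _ | ⟨c, l⟩⟩⟩ <;> grind [walkStep, IsReducedWalk]

lemma walkStep_walkStep_eq (h : IsReducedWalk l) (hx : l.head? = some x)
    (hxyz : x = y ∨ y = z ∨ x = z) :
    walkStep (walkStep l y) z = walkStep l z := by
  rcases hxyz with rfl | rfl | rfl
  · rw [walkStep_of_head?_eq hx]
  · rw [walkStep_of_head?_eq (head?_walkStep l y)]
  · rw [walkStep_walkStep_cancel h hx, walkStep_of_head?_eq hx]

/-- The walk obtained from `l` by moving on to `x 1`, …, `x n` with cancellation of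
backtracking. -/
noncomputable def runWalk (l : List A) (x : ℕ → A) : ℕ → List A
  | 0 => l
  | n + 1 => walkStep (runWalk l x n) (x (n + 1))

variable {x x' : ℕ → A} {n : ℕ}

lemma isReducedWalk_runWalk (h : IsReducedWalk l) (x : ℕ → A) :
    ∀ n, IsReducedWalk (runWalk l x n)
  | 0 => h
  | n + 1 => isReducedWalk_walkStep (isReducedWalk_runWalk h x n) _

lemma head?_runWalk (h : l.head? = some (x 0)) : ∀ n, (runWalk l x n).head? = some (x n)
  | 0 => h
  | _ + 1 => head?_walkStep _ _

lemma runWalk_of_forall_eq (h : l.head? = some (x 0)) (hx : ∀ i, x i = x 0) :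
    ∀ n, runWalk l x n = l
  | 0 => rfl
  | n + 1 => by
    rw [runWalk, runWalk_of_forall_eq h hx n, walkStep_of_head?_eq (by rw [h, hx (n + 1)])]

lemma runWalk_walkStep (hl : IsReducedWalk l) (h0 : l.head? = some (x 0))
    (hx' : ∀ i, x i = x' i ∨ x' i = x' (i + 1) ∨ x i = x' (i + 1))
    (hx : ∀ i, x i = x (i + 1) ∨ x (i + 1) = x' (i + 1) ∨ x i = x' (i + 1)) :
    ∀ n, runWalk (walkStep l (x' 0)) x' n =
      walkStep (runWalk l x n) (x' n)
  | 0 => rfl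
  | n + 1 => by
    have hred := isReducedWalk_runWalk hl x n
    have hhead := head?_runWalk h0 n
    rw [runWalk, runWalk, runWalk_walkStep hl h0 hx' hx n,
      walkStep_walkStep_eq hred hhead (hx' n), walkStep_walkStep_eq hred hhead (hx n)]

lemma exists_runWalk_eq_map_append (h : ∀ i ≤ n, l.length ≤ (runWalk l x i).length) :
    ∃ js : List ℕ, runWalk l x n = js.map x ++ l ∧ (n :: js).Pairwise (· ≥ ·) := by
  induction n with
  | zero => exact ⟨[], rfl, List.pairwise_singleton ..⟩
  | succ n ih =>
    obtain ⟨js, hjs, hmono⟩ := ih fun i hi => h i (hi.trans n.le_succ)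
    obtain ⟨hle, hmono'⟩ := List.pairwise_cons.1 hmono
    have hle' (j : ℕ) (hj : j ∈ js) : n + 1 ≥ j := (hle j hj).trans n.le_succ
    rcases walkStep_eq_self_or_tail_or_cons (runWalk l x n) (x (n + 1)) with hs | hs | hs <;>
      rw [hjs] at hs
    · exact ⟨js, by rw [runWalk, hjs, hs], .cons hle' hmono'⟩
    · cases js with
      | nil =>
        have hlen := h (n + 1) le_rfl
        refine ⟨[], ?_, List.pairwise_singleton ..⟩
        rw [runWalk, hjs, hs] at hlen ⊢
        cases l with
        | nil => rfl
        | cons a l => simp at hlen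
      | cons j js =>
        refine ⟨js, by rw [runWalk, hjs, hs]; rfl, .cons (fun i hi => ?_) hmono'.tail⟩
        exact hle' i (.tail _ hi)
    · refine ⟨(n + 1) :: js, by rw [runWalk, hjs, hs]; rfl, .cons ?_ (.cons hle' hmono')⟩
      rintro j (_ | ⟨_, hj⟩)
      exacts [le_rfl, hle' j hj]

end ReducedWalks

section Labelings

variable {X Z Z' A : Type*}

/-- A labeling of a space takes, near every point, at most two values. -/
def LocallyTwoValued [TopologicalSpace Z] (κ : Z → A) : Prop :=
  ∀ z, ∃ s : Set A, s.encard ≤ 2 ∧ ∀ᶠ w in 𝓝 z, κ w ∈ s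

lemma LocallyTwoValued.comp [TopologicalSpace Z] [TopologicalSpace Z'] {κ : Z → A}
    (hκ : LocallyTwoValued κ) {f : Z' → Z} (hf : Continuous f) : LocallyTwoValued (κ ∘ f) :=
  fun z => (hκ (f z)).imp fun _ hs => ⟨hs.1, hf.continuousAt.eventually hs.2⟩

lemma eq_or_eq_or_eq_of_encard_le_two {s : Set A} (hs : s.encard ≤ 2) {x y z : A}
    (hx : x ∈ s) (hy : y ∈ s) (hz : z ∈ s) : x = y ∨ y = z ∨ x = z := by
  by_contra! h
  have hle := Set.encard_le_encard (show {x, y, z} ⊆ s by grind)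
  rw [Set.encard_eq_three.2 ⟨x, y, z, h.1, h.2.2, h.2.1, rfl⟩] at hle
  exact absurd (hle.trans hs) (by decide)

-- `g x` is a member of the cover in which `x` lies deepest.
lemma exists_forall_eventually_mem_of_finite_cover [PseudoEMetricSpace X] {V : Set (Set X)}
    (hfin : V.Finite) (hopen : ∀ v ∈ V, IsOpen v) (hcover : ⋃₀ V = univ) :
    ∃ g : X → Set X, (∀ x, g x ∈ V) ∧ ∀ x, ∀ᶠ y in 𝓝 x, x ∈ g y := by
  have hcov (x : X) : ∃ v ∈ V, x ∈ v := by rw [← mem_sUnion, hcover]; trivial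
  choose g hgV hg using fun x =>
    exists_max_image V (fun v => Metric.infEDist x vᶜ) hfin ((hcov x).imp fun _ hv => hv.1)
  refine ⟨g, hgV, fun x => ?_⟩
  obtain ⟨v, hvV, hxv⟩ := hcov x
  have hpos : edist x x < Metric.infEDist x vᶜ := by
    rw [edist_self, Metric.infEDist_pos_iff_notMem_closure, (hopen v hvV).isClosed_compl.closure_eq]
    exact fun h => h hxv
  filter_upwards [(continuous_id.edist continuous_const).continuousAt.eventually_lt
    Metric.continuous_infEDist.continuousAt hpos] with y hy
  by_contra hxy
  exact absurd (hy.trans_le (hg y v hvV)) (Metric.infEDist_le_edist_of_mem hxy).not_gt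

lemma CovDimLE.exists_labeling [MetricSpace X] [Nonempty X] (hdim : CovDimLE X 1)
    {K : Set X} (hK : IsCompact K) {ε : ℝ} (hε : 0 < ε) :
    ∃ c : X → X, LocallyTwoValued c ∧ ∀ x ∈ K, dist x (c x) < ε := by
  obtain ⟨T, -, hTfin, hT⟩ := hK.finite_cover_balls (half_pos hε)
  obtain ⟨V, hVfin, hVopen, hVcov, hVsub, hVcard⟩ := hdim
    (insert Kᶜ ((Metric.ball · (ε / 2)) '' T)) ((hTfin.image _).insert _)
    (by simp [hK.isClosed.isOpen_compl, Metric.isOpen_ball])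
    (by
      rw [sUnion_insert, sUnion_image, eq_univ_iff_forall]
      exact fun x => (em (x ∈ K)).symm.imp id (@hT x))
  obtain ⟨g, hgV, hg⟩ := exists_forall_eventually_mem_of_finite_cover hVfin hVopen hVcov
  have hdist {v : Set X} (hv : v ∈ V) {x y : X} (hx : x ∈ v) (hy : y ∈ v) (hxK : x ∈ K) :
      dist x y < ε := by
    obtain ⟨u, rfl | ⟨z, -, rfl⟩, hvu⟩ := hVsub v hv
    · exact absurd hxK (hvu hx)
    · linarith [dist_triangle_right x y z, Metric.mem_ball.1 (hvu hx), Metric.mem_ball.1 (hvu hy)]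
  choose! p hp using fun (v : Set X) (hv : v.Nonempty) => hv
  refine ⟨fun x => p (g x), fun x => ⟨p '' {v ∈ V | x ∈ v}, ?_, ?_⟩, fun x hx => ?_⟩
  · refine (encard_image_le _ _).trans ?_
    rw [← (hVfin.subset fun v hv => hv.1).cast_ncard_eq]
    exact_mod_cast hVcard x
  · filter_upwards [hg x] with y hy using mem_image_of_mem p ⟨hgV y, hy⟩
  · have hxg : x ∈ g x := (hg x).self_of_nhds
    exact hdist (hgV x) hxg (hp _ ⟨x, hxg⟩) hx

end Labelings

section WalkLifts

variable {Z Z' A : Type*}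

/-- A walk lift of a labeling `κ` of `Z`: to each point `z` is attached a reduced walk ending at
`κ z`, and nearby points have walks that differ by one step. -/
structure IsWalkLift [TopologicalSpace Z] (κ : Z → A) (S : Z → List A) : Prop where
  head : ∀ z, (S z).head? = some (κ z)
  isReduced : ∀ z, IsReducedWalk (S z)
  step : ∀ z, ∀ᶠ p in 𝓝 (z, z), S p.2 = walkStep (S p.1) (κ p.2)

lemma IsWalkLift.comp [TopologicalSpace Z] [TopologicalSpace Z'] {κ : Z → A} {S : Z → List A}
    (h : IsWalkLift κ S) {f : Z' → Z} (hf : Continuous f) : IsWalkLift (κ ∘ f) (S ∘ f) where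
  head _ := h.head _
  isReduced _ := h.isReduced _
  step z := ((hf.prodMap hf).tendsto (z, z)).eventually (h.step (f z))

lemma isWalkLift_const [TopologicalSpace Z] {a : A} {l : List A} (hl : IsReducedWalk l)
    (ha : l.head? = some a) : IsWalkLift (fun _ : Z => a) fun _ => l where
  head _ := ha
  isReduced _ := hl
  step _ := .of_forall fun _ => (walkStep_of_head?_eq ha).symm

lemma IsWalkLift.eq_of_apply_eq [TopologicalSpace Z] [PreconnectedSpace Z] {κ : Z → A}
    {S S' : Z → List A} (h : IsWalkLift κ S) (h' : IsWalkLift κ S') {z₀ : Z}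
    (h₀ : S z₀ = S' z₀) : S = S' := by
  refine funext fun z => PreconnectedSpace.induction₂' (fun x y => S x = S' x → S y = S' y)
    (fun x => ?_) ⟨fun _ _ _ hxy hyz => hyz ∘ hxy⟩ z₀ z h₀
  obtain ⟨u, hu, hstep⟩ := eventually_prod_self_iff'.1
    (nhds_prod_eq (x := x) (y := x) ▸ (h.step x).and (h'.step x))
  filter_upwards [hu] with y hy
  have hx := mem_of_mem_nhds hu
  constructor <;> intro heq
  · rw [(hstep x hx y hy).1, (hstep x hx y hy).2, heq]
  · rw [(hstep y hy x hx).1, (hstep y hy x hx).2, heq]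

lemma exists_monotone_dist_lt {r : ℝ} (hr : 0 < r) :
    ∃ (t : ℕ → I) (n : ℕ), Monotone t ∧ t 0 = 0 ∧ t n = 1 ∧
      ∀ i, dist (t i) (t (i + 1)) < r := by
  obtain ⟨t, h0, hmono, ⟨n, hn⟩, hball⟩ := exists_monotone_Icc_subset_open_cover_unitInterval
    (c := fun x : I => Metric.ball x (r / 2)) (fun _ => Metric.isOpen_ball)
    fun x _ => mem_iUnion.2 ⟨x, Metric.mem_ball_self (half_pos hr)⟩
  refine ⟨t, n, hmono, h0, hn n le_rfl, fun i => ?_⟩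
  obtain ⟨c, hc⟩ := hball i
  have hle := hmono i.le_succ
  have h₁ := Metric.mem_ball.1 (hc (left_mem_Icc.2 hle))
  have h₂ := Metric.mem_ball.1 (hc (right_mem_Icc.2 hle))
  exact (dist_triangle_right _ _ c).trans_lt (by linarith)

lemma LocallyTwoValued.exists_pos_forall_dist_lt [PseudoMetricSpace Z] [CompactSpace Z]
    {κ : Z → A} (hκ : LocallyTwoValued κ) :
    ∃ r > 0, ∀ x y z, dist y x < r → dist z x < r → κ x = κ y ∨ κ y = κ z ∨ κ x = κ z := by
  choose s hs hκs using hκ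
  obtain ⟨r, hr, hball⟩ := lebesgue_number_lemma_of_metric (isCompact_univ (X := Z))
    (c := fun z => interior (κ ⁻¹' s z)) (fun _ => isOpen_interior)
    fun z _ => mem_iUnion.2 ⟨z, mem_interior_iff_mem_nhds.2 (hκs z)⟩
  refine ⟨r, hr, fun x y z hy hz => ?_⟩
  obtain ⟨w, hw⟩ := hball x trivial
  have hmem {v : Z} (hv : dist v x < r) : κ v ∈ s w := interior_subset (s := κ ⁻¹' s w) (hw hv)
  exact eq_or_eq_or_eq_of_encard_le_two (hs w) (hmem (by simpa using hr)) (hmem hy) (hmem hz)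

-- The lift at `z` runs along the labels of the track of `z` under the contraction `H`.
lemma LocallyTwoValued.exists_isWalkLift [PseudoMetricSpace Z] [CompactSpace Z] {κ : Z → A}
    (hκ : LocallyTwoValued κ) {H : I × Z → Z} (hH : Continuous H) {z₀ : Z}
    (hH₀ : ∀ z, H (0, z) = z₀) (hH₁ : ∀ z, H (1, z) = z) (hHz₀ : ∀ u, H (u, z₀) = z₀) {l : List A}
    (hl : IsReducedWalk l) (hhead : l.head? = some (κ z₀)) :
    ∃ S, IsWalkLift κ S ∧ S z₀ = l := by
  obtain ⟨r, hr, hr'⟩ := (hκ.comp hH).exists_pos_forall_dist_lt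
  obtain ⟨t, n, -, ht0, htn, ht⟩ := exists_monotone_dist_lt hr
  set x : Z → ℕ → A := fun z i => κ (H (t i, z)) with hx
  have hx0 (z : Z) : l.head? = some (x z 0) := by simp only [hx, ht0, hH₀, hhead]
  have hxn (z : Z) : x z n = κ z := by simp only [hx, htn, hH₁]
  refine ⟨fun z => runWalk l (x z) n, ⟨fun z => ?_, fun z => isReducedWalk_runWalk hl _ n,
    fun z => ?_⟩, runWalk_of_forall_eq (hx0 z₀) (fun i => by simp only [hx, hHz₀]) n⟩
  · rw [head?_runWalk (hx0 z), hxn]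
  · have hnear : ∀ᶠ p in 𝓝 (z, z), dist p.2 p.1 < r :=
      (continuous_snd.dist continuous_fst).continuousAt.eventually_lt continuousAt_const
        (by simpa using hr)
    filter_upwards [hnear] with p hp
    have ht' (i : ℕ) : dist (t (i + 1)) (t i) < r := dist_comm (t i) _ ▸ ht i
    have hrow := runWalk_walkStep (x := x p.1) (x' := x p.2) hl (hx0 p.1)
      (fun i => hr' (t i, p.1) (t i, p.2) (t (i + 1), p.2)
        (by simpa [Prod.dist_eq, hr] using hp) (by simpa [Prod.dist_eq, ht' i] using hp))
      (fun i => hr' (t i, p.1) (t (i + 1), p.1) (t (i + 1), p.2)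
        (by simpa [Prod.dist_eq, hr] using ht' i) (by simpa [Prod.dist_eq, ht' i] using hp)) n
    rwa [walkStep_of_head?_eq (hx0 p.2), hxn] at hrow

lemma IsWalkLift.apply_one_eq_of_homotopic {X : Type*} [TopologicalSpace X] {a b : X}
    {P Q : Path a b} (hPQ : P.Homotopic Q) {c : X → A} (hc : LocallyTwoValued c)
    {S T : I → List A} (hS : IsWalkLift (c ∘ P) S) (hT : IsWalkLift (c ∘ Q) T)
    (hST : S 0 = T 0) : S 1 = T 1 := by
  obtain ⟨F⟩ := hPQ
  obtain ⟨R, hR, hR0⟩ := (hc.comp F.continuous).exists_isWalkLift (z₀ := (0, 0))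
    (H := fun p => (p.1 * p.2.1, p.1 * p.2.2)) (by fun_prop) (by simp) (by simp) (by simp)
    (hS.isReduced 0) (by simpa using hS.head 0)
  have hbottom : (fun t => R (0, t)) = S :=
    (hR.comp (f := fun t => (0, t)) (by fun_prop)).eq_of_apply_eq
      (by simpa [Function.comp_def] using hS) hR0
  have hside (e : I) (x : X) (he : ∀ u, F (u, e) = x) : R (0, e) = R (1, e) := by
    have hconst := isWalkLift_const (Z := I) (hR.isReduced (0, e)) (hR.head (0, e))
    refine congrFun (hconst.eq_of_apply_eq (z₀ := 0) (S' := fun u => R (u, e)) ?_ rfl) 1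
    simpa [Function.comp_def, he] using hR.comp (f := fun u => (u, e)) (by fun_prop)
  have htop : (fun t => R (1, t)) = T :=
    (hR.comp (f := fun t => (1, t)) (by fun_prop)).eq_of_apply_eq (z₀ := 0)
      (by simpa [Function.comp_def] using hT) (by
        rw [← hST, ← hR0]; exact (hside 0 a fun u => F.source u).symm)
  rw [← hbottom, ← htop]
  exact hside 1 b fun u => F.target u

lemma IsWalkLift.exists_dist_lt [PseudoMetricSpace Z] [CompactSpace Z] {κ : Z → A}
    {S : Z → List A} (h : IsWalkLift κ S) :
    ∃ r > 0, ∀ x y, dist x y < r → S y = walkStep (S x) (κ y) := by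
  have hdiag : ∀ᶠ p in uniformity Z, S p.2 = walkStep (S p.1) (κ p.2) := by
    rw [← nhdsSet_diagonal_eq_uniformity, eventually_nhdsSet_iff_forall]
    rintro ⟨x, y⟩ (rfl : x = y)
    exact h.step x
  obtain ⟨r, hr, hr'⟩ := Metric.mem_uniformity_dist.1 hdiag
  exact ⟨r, hr, fun x y hxy => hr' hxy⟩

lemma dist_convexComb_convexComb (r t x y : I) :
    dist (Icc.convexComb r t x) (Icc.convexComb r t y) = dist x y * dist r t := by
  simp only [Subtype.dist_eq, Icc.coe_convexComb, Real.dist_eq, ← abs_mul]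
  rw [← abs_neg]
  ring_nf

lemma IsWalkLift.exists_eq_map_append {κ : I → A} {S : I → List A} (h : IsWalkLift κ S) {r t : I}
    (hmin : ∀ τ ∈ uIcc r t, (S r).length ≤ (S τ).length) :
    ∃ Ts : List I, S t = Ts.map κ ++ S r ∧ (∀ τ ∈ Ts, τ ∈ uIcc r t) ∧
      (t :: Ts).Pairwise fun τ τ' => dist τ τ' + dist τ' r = dist τ r := by
  have hmem (x : I) : Icc.convexComb r t x ∈ uIcc r t := by
    rw [← Path.range_subpathAux]; exact mem_range_self x
  obtain ⟨δ, hδ, hδ'⟩ := (h.comp (Icc.continuous_convexComb r t)).exists_dist_lt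
  obtain ⟨u, n, hmono, hu0, hun, hu⟩ := exists_monotone_dist_lt hδ
  set e : ℕ → I := Icc.convexComb r t ∘ u with he
  have he0 : e 0 = r := by simp [he, hu0]
  have hen : e n = t := by simp [he, hun]
  have hrun (i : ℕ) : runWalk (S r) (κ ∘ e) i = S (e i) := by
    induction i with
    | zero => rw [runWalk, he0]
    | succ i ih => rw [runWalk, ih]; exact (hδ' _ _ (hu i)).symm
  obtain ⟨js, hjs, hjs_mono⟩ := exists_runWalk_eq_map_append (n := n) fun i _ =>
    (hrun i).symm ▸ hmin _ (hmem (u i))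
  refine ⟨js.map e, by rw [List.map_map, ← hjs, hrun, hen], ?_, ?_⟩
  · simp only [List.mem_map]
    rintro _ ⟨j, -, rfl⟩
    exact hmem (u j)
  · rw [← hen, ← List.map_cons]
    refine hjs_mono.map e fun i j (hij : j ≤ i) => ?_
    have hij' : (u j : ℝ) ≤ u i := hmono hij
    have hdist (k : ℕ) : dist (e k) r = u k * dist r t := by
      conv_lhs => rw [← he0]
      rw [he, Function.comp_apply, Function.comp_apply, dist_convexComb_convexComb, hu0,
        Subtype.dist_eq, Real.dist_eq, Icc.coe_zero, sub_zero, abs_of_nonneg (u k).2.1]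
    rw [hdist, hdist, he, Function.comp_apply, Function.comp_apply, dist_convexComb_convexComb,
      Subtype.dist_eq, Real.dist_eq, abs_of_nonneg (sub_nonneg.2 hij')]
    ring

end WalkLifts

section ChainCost

variable {X T : Type*} {θ : X → X → ℝ}

/-- The largest cost of a chain of jumps from `p` through some of the points of the list, taken in
order, where a jump from `p` to `q` costs `θ p q`. -/
noncomputable def chainCost (θ : X → X → ℝ) : X → List X → ℝ
  | _, [] => 0
  | p, q :: l => max (chainCost θ p l) (θ p q + chainCost θ q l)

lemma chainCost_nonneg (p : X) : ∀ l, 0 ≤ chainCost θ p l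
  | [] => le_rfl
  | _ :: l => le_max_of_le_left (chainCost_nonneg p l)

lemma chainCost_le_chainCost_append (p : X) (l' : List X) :
    ∀ l, chainCost θ p l' ≤ chainCost θ p (l ++ l')
  | [] => le_rfl
  | _ :: l => le_max_of_le_left (chainCost_le_chainCost_append p l' l)

lemma chainCost_le_add_dist [PseudoMetricSpace X] (hθ : ∀ p p' q, θ p q ≤ θ p' q + dist p p')
    (p p' : X) : ∀ l, chainCost θ p l ≤ chainCost θ p' l + dist p p'
  | [] => by simp [chainCost]
  | q :: l => by
    have hl := chainCost_le_add_dist hθ p p' l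
    rw [chainCost, chainCost, ← max_add_add_right]
    exact max_le_max hl (by linarith [hθ p p' q])

lemma le_chainCost_of_head?_eq {p q : X} (hq : θ q q ≤ 0) {l : List X} (hl : l.head? = some q) :
    θ p q + chainCost θ q l ≤ chainCost θ p l := by
  obtain ⟨l, rfl⟩ : ∃ l', l = q :: l' := ⟨_, List.eq_cons_of_mem_head? hl⟩
  refine le_max_of_le_right (add_le_add le_rfl (max_le le_rfl ?_))
  linarith

lemma chainCost_map_append_le [PseudoMetricSpace T] {g : T → X} {J : Set T} {r : T}
    (hθ : ∀ τ ∈ J, ∀ τ' ∈ J, θ (g τ) (g τ') ≤ dist τ τ') {l : List X} {C : ℝ}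
    (hC : ∀ τ ∈ J, chainCost θ (g τ) l ≤ C) (Ts : List T) {t : T} (ht : t ∈ J)
    (hTs : ∀ τ ∈ Ts, τ ∈ J)
    (hmono : (t :: Ts).Pairwise fun τ τ' => dist τ τ' + dist τ' r = dist τ r) :
    chainCost θ (g t) (Ts.map g ++ l) ≤ C + dist t r := by
  induction Ts generalizing t with
  | nil => exact (hC t ht).trans (le_add_of_nonneg_right dist_nonneg)
  | cons q Ts ih =>
    obtain ⟨hq, hTs'⟩ := List.forall_mem_cons.1 hTs
    obtain ⟨ht_all, hmono'⟩ := List.pairwise_cons.1 hmono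
    obtain ⟨htq, ht_Ts⟩ := List.forall_mem_cons.1 ht_all
    have hskip := ih ht hTs' (.cons ht_Ts hmono'.tail)
    have hjump := ih hq hTs' hmono'
    rw [List.map_cons, List.cons_append, chainCost]
    exact max_le hskip (by linarith [hθ t ht q hq])

end ChainCost

section TimeCost

variable {X T : Type*}

/-- The cost of travelling from `p` to `q` with the help of `f`, which is joined at the expense of
the distance to it and followed at unit speed. -/
noncomputable def timeCost [PseudoMetricSpace X] [PseudoMetricSpace T] (f : T → X) (p q : X) : ℝ :=
  ⨅ z : T × T, dist z.1 z.2 + dist p (f z.1) + dist q (f z.2)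

section

variable [PseudoMetricSpace X] [PseudoMetricSpace T]

lemma timeCost_nonneg (f : T → X) (p q : X) : 0 ≤ timeCost f p q :=
  Real.iInf_nonneg fun _ => by positivity

lemma timeCost_le (f : T → X) (p q : X) (s t : T) :
    timeCost f p q ≤ dist s t + dist p (f s) + dist q (f t) :=
  ciInf_le ⟨0, by rintro _ ⟨z, rfl⟩; dsimp only; positivity⟩ (s, t)

lemma timeCost_le_add_dist_add_dist [Nonempty T] (f : T → X) (p p' q q' : X) :
    timeCost f p q ≤ timeCost f p' q' + dist p p' + dist q q' := by
  rw [← sub_le_iff_le_add, ← sub_le_iff_le_add]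
  refine le_ciInf fun z => ?_
  linarith [timeCost_le f p q z.1 z.2, dist_triangle p p' (f z.1), dist_triangle q q' (f z.2)]

end

lemma eq_of_timeCost_eq_zero [MetricSpace X] [MetricSpace T] [CompactSpace T] [Nonempty T]
    {f : T → X} (hf : Continuous f) {p q : X} (h : timeCost f p q = 0) :
    p = q := by
  obtain ⟨z, -, hz⟩ := isCompact_univ.exists_isMinOn univ_nonempty (Continuous.continuousOn
    (f := fun z : T × T => dist z.1 z.2 + dist p (f z.1) + dist q (f z.2)) (by fun_prop))
  have hle : dist z.1 z.2 + dist p (f z.1) + dist q (f z.2) ≤ 0 :=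
    (le_ciInf fun w => hz (mem_univ w)).trans h.le
  have hz12 := dist_nonneg (x := z.1) (y := z.2)
  have hp := dist_nonneg (x := p) (y := f z.1)
  have hq := dist_nonneg (x := q) (y := f z.2)
  rw [dist_le_zero.1 (show dist p (f z.1) ≤ 0 by linarith),
    dist_le_zero.1 (show dist q (f z.2) ≤ 0 by linarith),
    dist_le_zero.1 (show dist z.1 z.2 ≤ 0 by linarith)]

end TimeCost

section ApproximateHeights

variable {X : Type*}

/-- The path `γ` is a loop which is homotopic, relative endpoints, to a constant path. -/
def IsNullhomotopicLoop [TopologicalSpace X] {a b : X} (γ : Path a b) : Prop :=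
  ∃ h : b = a, (γ.cast h rfl).Homotopic (Path.refl b)

/-- An approximation, with error `ε`, to a height function that presents the parameter interval of
`α` as the contour of a tree through which `α` factors. The fork of `s` and `t` is the parameter
between them at which the branches leading to `s` and to `t` separate. Since `timeCost` vanishes
only between equal points, an exact height function (`ε = 0`) cannot be equal at `s`, at `t` and at
their fork unless `α s = α t`. -/
structure IsApproxHeight [PseudoMetricSpace X] {a b : X} (α : Path a b) (ε : ℝ) (h : I → ℝ) :
    Prop where
  map_zero : h 0 = 0
  nonneg : ∀ t, 0 ≤ h t
  exists_fork : ∀ s t, ∃ r ∈ uIcc s t, h r + timeCost α (α s) (α r) ≤ h s + ε ∧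
    h r + timeCost α (α t) (α r) ≤ h t + ε
  abs_sub_le : ∀ s t, |h s - h t| ≤ dist s t + Metric.diam (α '' uIcc s t) + ε
  eq_of_nullhomotopic : ∀ s t, IsNullhomotopicLoop (α.subpath s t) → h s = h t

lemma IsWalkLift.chainCost_bounds [PseudoMetricSpace X] {θ : X → X → ℝ} {κ : I → X}
    {S : I → List X} (hS : IsWalkLift κ S) (hθ : ∀ p p' q, θ p q ≤ θ p' q + dist p p')
    (hκ : ∀ s t, θ (κ s) (κ t) ≤ dist s t) {r t : I}
    (hmin : ∀ τ ∈ uIcc r t, (S r).length ≤ (S τ).length) {η : ℝ}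
    (hη : ∀ τ ∈ uIcc r t, dist (κ τ) (κ r) ≤ η) :
    chainCost θ (κ r) (S r) + θ (κ t) (κ r) ≤ chainCost θ (κ t) (S t) ∧
      chainCost θ (κ t) (S t) ≤ chainCost θ (κ r) (S r) + dist r t + η := by
  obtain ⟨Ts, hTs, hTs_mem, hmono⟩ := hS.exists_eq_map_append hmin
  rw [hTs]
  constructor
  · rw [add_comm]
    refine le_trans ?_ (chainCost_le_chainCost_append _ _ _)
    exact le_chainCost_of_head?_eq ((hκ r r).trans_eq (dist_self r)) (hS.head r)
  · have hC (τ : I) (hτ : τ ∈ uIcc r t) :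
        chainCost θ (κ τ) (S r) ≤ chainCost θ (κ r) (S r) + η := by
      linarith [chainCost_le_add_dist hθ (κ τ) (κ r) (S r), hη τ hτ]
    have hle := chainCost_map_append_le (fun τ _ τ' _ => hκ τ τ') hC Ts right_mem_uIcc
      hTs_mem hmono
    rw [dist_comm t r] at hle
    linarith

-- The fork is a parameter at which the walk is shortest.
lemma IsWalkLift.exists_chainCost_bounds [PseudoMetricSpace X] {θ : X → X → ℝ} {κ : I → X}
    {S : I → List X} (hS : IsWalkLift κ S) (hθ : ∀ p p' q, θ p q ≤ θ p' q + dist p p')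
    (hκ : ∀ s t, θ (κ s) (κ t) ≤ dist s t) {s t : I} {η : ℝ}
    (hη : ∀ τ ∈ uIcc s t, ∀ τ' ∈ uIcc s t, dist (κ τ) (κ τ') ≤ η) :
    ∃ r ∈ uIcc s t, ∀ τ ∈ ({s, t} : Set I),
      chainCost θ (κ r) (S r) + θ (κ τ) (κ r) ≤ chainCost θ (κ τ) (S τ) ∧
        chainCost θ (κ τ) (S τ) ≤ chainCost θ (κ r) (S r) + dist s t + η := by
  obtain ⟨r, hr, hmin⟩ := exists_minimalFor_of_wellFoundedLT (· ∈ uIcc s t)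
    (fun τ => (S τ).length) ⟨s, left_mem_uIcc⟩
  refine ⟨r, hr, fun τ hτ => ?_⟩
  have hτ_mem : τ ∈ uIcc s t := by
    rcases hτ with rfl | rfl
    exacts [left_mem_uIcc, right_mem_uIcc]
  have hsub : uIcc r τ ⊆ uIcc s t := uIcc_subset_uIcc hr hτ_mem
  have hdist : dist r τ ≤ dist s t := Real.dist_le_of_mem_uIcc hr hτ_mem
  obtain ⟨hlower, hupper⟩ := hS.chainCost_bounds hθ hκ
    (fun v hv => (le_total _ _).elim id (hmin (hsub hv)))
    fun v hv => hη v (hsub hv) r hr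
  exact ⟨hlower, by linarith⟩

lemma IsWalkLift.apply_eq_of_isNullhomotopicLoop [TopologicalSpace X] {A : Type*} {c : X → A}
    (hc : LocallyTwoValued c) {a b : X} {α : Path a b} {S : I → List A}
    (hS : IsWalkLift (c ∘ α) S) {s t : I} (h : IsNullhomotopicLoop (α.subpath s t)) :
    S s = S t := by
  obtain ⟨hst, hnull⟩ := h
  have hlift := hS.comp (Icc.continuous_convexComb s t)
  have hhead : (S s).head? = some (c (α t)) := by
    rw [hst]
    exact hS.head s
  have hconst := isWalkLift_const (Z := I) (hS.isReduced s) hhead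
  have hone := hlift.apply_one_eq_of_homotopic hnull hc hconst (by simp)
  simpa using hone.symm

lemma exists_isWalkLift_path [PseudoMetricSpace X] {A : Type*} {c : X → A}
    (hc : LocallyTwoValued c) {a b : X} (α : Path a b) :
    ∃ S, IsWalkLift (c ∘ α) S ∧ S 0 = [c a] :=
  (hc.comp α.continuous).exists_isWalkLift (H := fun p => p.1 * p.2) (by fun_prop) (by simp)
    (by simp) (by simp) (isReducedWalk_singleton _) (by simp)

lemma dist_comp_le_diam_add [PseudoMetricSpace X] {f : I → X} (hf : Continuous f) {c : X → X}
    {δ : ℝ} (hc : ∀ t, dist (f t) (c (f t)) ≤ δ) {s t τ τ' : I} (hτ : τ ∈ uIcc s t)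
    (hτ' : τ' ∈ uIcc s t) :
    dist (c (f τ)) (c (f τ')) ≤ Metric.diam (f '' uIcc s t) + 2 * δ := by
  have hdiam := Metric.dist_le_diam_of_mem (isCompact_uIcc.image hf).isBounded
    (mem_image_of_mem f hτ) (mem_image_of_mem f hτ')
  linarith [dist_triangle4 (c (f τ)) (f τ) (f τ') (c (f τ')), hc τ, hc τ',
    dist_comm (f τ) (c (f τ))]

-- Labels are only accurate up to `ε / 4`. Discounting each jump by `ε / 2` keeps these errors from
-- adding up along a chain: between labels, the discounted cost is bounded by elapsed time.
lemma exists_isApproxHeight [MetricSpace X] (hdim : CovDimLE X 1) {a b : X} (α : Path a b) {ε : ℝ}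
    (hε : 0 < ε) : ∃ h, IsApproxHeight α ε h := by
  have : Nonempty X := ⟨a⟩
  obtain ⟨c, hc, hcα⟩ := hdim.exists_labeling (isCompact_range α.continuous)
    (show 0 < ε / 4 by positivity)
  replace hcα (t : I) : dist (α t) (c (α t)) ≤ ε / 4 := (hcα _ (mem_range_self t)).le
  obtain ⟨S, hS, hS0⟩ := exists_isWalkLift_path hc α
  obtain ⟨θ, hθ⟩ : ∃ θ : X → X → ℝ, ∀ p q, θ p q = timeCost α p q - ε / 2 :=
    ⟨_, fun _ _ => rfl⟩
  have hθ_dist (p p' q : X) : θ p q ≤ θ p' q + dist p p' := by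
    linarith [hθ p q, hθ p' q, timeCost_le_add_dist_add_dist α p p' q q, dist_self q]
  have hθ_le (s t : I) : θ (c (α s)) (c (α t)) ≤ dist s t := by
    linarith [hθ (c (α s)) (c (α t)), timeCost_le α (c (α s)) (c (α t)) s t, hcα s, hcα t,
      dist_comm (α s) (c (α s)), dist_comm (α t) (c (α t))]
  have hθ_ge (s t : I) : timeCost α (α s) (α t) - ε ≤ θ (c (α s)) (c (α t)) := by
    linarith [hθ (c (α s)) (c (α t)), hcα s, hcα t,
      timeCost_le_add_dist_add_dist α (α s) (c (α s)) (α t) (c (α t))]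
  have hθ_neg (p q : X) : -(ε / 2) ≤ θ p q := by linarith [hθ p q, timeCost_nonneg α p q]
  have hfork (s t : I) := hS.exists_chainCost_bounds hθ_dist hθ_le (s := s) (t := t)
    fun τ hτ τ' hτ' => dist_comp_le_diam_add α.continuous hcα hτ hτ'
  simp only [Function.comp_apply] at hfork
  refine ⟨fun t => chainCost θ (c (α t)) (S t), ?_, fun t => chainCost_nonneg _ _, fun s t => ?_,
    fun s t => ?_, fun s t hst => ?_⟩
  · have h0 : θ (c a) (c a) ≤ 0 := by simpa using hθ_le 0 0
    simp [hS0, chainCost, h0]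
  · obtain ⟨r, hr, hbound⟩ := hfork s t
    exact ⟨r, hr, by linarith [hθ_ge s r, (hbound s (by simp)).1],
      by linarith [hθ_ge t r, (hbound t (by simp)).1]⟩
  · obtain ⟨r, -, hbound⟩ := hfork s t
    obtain ⟨hs, hs'⟩ := hbound s (by simp)
    obtain ⟨ht, ht'⟩ := hbound t (by simp)
    rw [abs_sub_le_iff]
    constructor <;> linarith [hθ_neg (c (α s)) (c (α r)), hθ_neg (c (α t)) (c (α r))]
  · have hα : α s = α t := hst.1.symm
    simp only [hα, hS.apply_eq_of_isNullhomotopicLoop hc hst]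

end ApproximateHeights

section HeightFunctions

variable {X : Type*}

lemma tendsto_diam_image_uIcc [PseudoMetricSpace X] {f : I → X} (hf : Continuous f) (z : I) :
    Tendsto (fun w => Metric.diam (f '' uIcc z w)) (𝓝 z) (𝓝 0) := by
  refine Metric.tendsto_nhds.2 fun ε hε => ?_
  have hsmall : ∀ᶠ w in 𝓝 z, uIcc z w ⊆ f ⁻¹' Metric.closedBall (f z) (ε / 3) := by
    refine (tendsto_const_nhds.uIcc tendsto_id).eventually (eventually_smallSets_subset.2 ?_)
    exact hf.continuousAt (Metric.closedBall_mem_nhds _ (by positivity))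
  filter_upwards [hsmall] with w hw
  rw [Real.dist_0_eq_abs, abs_of_nonneg Metric.diam_nonneg]
  have hdiam := Metric.diam_mono (image_subset_iff.2 hw) Metric.isBounded_closedBall
  linarith [Metric.diam_closedBall (x := f z) (show 0 ≤ ε / 3 by positivity)]

lemma tendsto_dist_add_diam_image_uIcc [PseudoMetricSpace X] {f : I → X} (hf : Continuous f)
    (z : I) : Tendsto (fun w => dist z w + Metric.diam (f '' uIcc z w)) (𝓝 z) (𝓝 0) := by
  have hdist : Tendsto (fun w => dist z w) (𝓝 z) (𝓝 0) := by
    simpa using (tendsto_const_nhds (x := z)).dist (tendsto_id (x := 𝓝 z))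
  simpa using hdist.add (tendsto_diam_image_uIcc hf z)

lemma IsApproxHeight.mem_Icc [PseudoMetricSpace X] {a b : X} {α : Path a b} {ε : ℝ} {h : I → ℝ}
    (hh : IsApproxHeight α ε h) (t : I) : h t ∈ Icc 0 (1 + Metric.diam (range α) + ε) := by
  refine ⟨hh.nonneg t, ?_⟩
  have hle := (le_abs_self _).trans (hh.abs_sub_le t 0)
  have hdiam := Metric.diam_mono (image_subset_range α (uIcc t 0))
    (isCompact_range α.continuous).isBounded
  rw [hh.map_zero, sub_zero] at hle
  have hdist : dist t 0 ≤ 1 := Real.dist_le_of_mem_Icc_01 t.2 (0 : I).2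
  linarith

lemma tendsto_timeCost_right [PseudoMetricSpace X] {T ι : Type*} [PseudoMetricSpace T] [Nonempty T]
    (f : T → X) (p : X) {l : Filter ι} {u : ι → X} {q : X} (hu : Tendsto u l (𝓝 q)) :
    Tendsto (fun i => timeCost f p (u i)) l (𝓝 (timeCost f p q)) := by
  have hcont : LipschitzWith 1 (timeCost f p) := LipschitzWith.of_le_add fun q q' => by
    linarith [timeCost_le_add_dist_add_dist f p p q q', dist_self p]
  exact (hcont.continuous.tendsto q).comp hu

lemma exists_isApproxHeight_zero_of_tendsto [PseudoMetricSpace X] {a b : X} {α : Path a b}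
    {ι : Type*} {U : Ultrafilter ι} {ε : ι → ℝ} (hε : Tendsto ε U (𝓝 0)) {h : ι → I → ℝ}
    (hh : ∀ n, IsApproxHeight α (ε n) (h n)) : ∃ L, IsApproxHeight α 0 L := by
  have hlim (t : I) : ∃ y, Tendsto (fun n => h n t) U (𝓝 y) := by
    have hmem : ∀ᶠ n in U, h n t ∈ Icc 0 (1 + Metric.diam (range α) + 1) := by
      filter_upwards [hε.eventually_le_const one_pos] with n hn
      exact Icc_subset_Icc_right (by linarith) ((hh n).mem_Icc t)
    obtain ⟨y, -, hy⟩ := isCompact_Icc.ultrafilter_le_nhds' (U.map fun n => h n t) hmem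
    exact ⟨y, hy⟩
  choose L hL using hlim
  have hL_diag {r : I} {u : ι → I} (hu : Tendsto u U (𝓝 r)) :
      Tendsto (fun n => h n (u n)) U (𝓝 (L r)) := by
    have hbound := ((tendsto_dist_add_diam_image_uIcc α.continuous r).comp hu).add hε
    rw [zero_add] at hbound
    have hdiff : Tendsto (fun n => h n r - h n (u n)) U (𝓝 0) :=
      squeeze_zero_norm (fun n => (hh n).abs_sub_le r (u n)) hbound
    simpa using (hL r).sub hdiff
  refine ⟨L, ?_, fun t => ?_, fun s t => ?_, fun s t => ?_, fun s t hst => ?_⟩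
  · exact tendsto_nhds_unique (hL 0) (by simp [(hh _).map_zero])
  · exact ge_of_tendsto' (hL t) fun n => (hh n).nonneg t
  · choose u hu hs ht using fun n => (hh n).exists_fork s t
    have hmem : ∀ᶠ n in U, u n ∈ uIcc s t := .of_forall hu
    obtain ⟨r, hr, hur⟩ := isCompact_uIcc.ultrafilter_le_nhds' (U.map u) hmem
    have hcost (p : X) := tendsto_timeCost_right α p ((α.continuous.tendsto r).comp hur)
    exact ⟨r, hr, le_of_tendsto_of_tendsto' ((hL_diag hur).add (hcost _)) ((hL s).add hε) hs,
      le_of_tendsto_of_tendsto' ((hL_diag hur).add (hcost _)) ((hL t).add hε) ht⟩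
  · exact le_of_tendsto_of_tendsto' ((hL s).sub (hL t)).abs (tendsto_const_nhds.add hε)
      fun n => (hh n).abs_sub_le s t
  · exact tendsto_nhds_unique (hL s) (by simpa only [(hh _).eq_of_nullhomotopic s t hst] using hL t)

lemma exists_isApproxHeight_zero [MetricSpace X] (hdim : CovDimLE X 1) {a b : X} (α : Path a b) :
    ∃ h, IsApproxHeight α 0 h := by
  choose h hh using fun n : ℕ => exists_isApproxHeight hdim α (Nat.one_div_pos_of_nat (n := n))
  exact exists_isApproxHeight_zero_of_tendsto (U := hyperfilter ℕ)
    (tendsto_one_div_add_atTop_nhds_zero_nat.mono_left Nat.hyperfilter_le_atTop) hh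

lemma IsApproxHeight.continuous [PseudoMetricSpace X] {a b : X} {α : Path a b} {h : I → ℝ}
    (hh : IsApproxHeight α 0 h) : Continuous h := by
  refine continuous_iff_continuousAt.2 fun z => tendsto_iff_dist_tendsto_zero.2 ?_
  refine squeeze_zero (fun _ => dist_nonneg) (fun w => ?_)
    (tendsto_dist_add_diam_image_uIcc α.continuous z)
  rw [dist_comm]
  exact (hh.abs_sub_le z w).trans_eq (add_zero _)

lemma IsApproxHeight.apply_eq [MetricSpace X] {a b : X} {α : Path a b} {h : I → ℝ}
    (hh : IsApproxHeight α 0 h) {s t : I} (hs : ∀ r ∈ uIcc s t, h s ≤ h r) (hst : h s = h t) :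
    α s = α t := by
  obtain ⟨r, hr, hsr, htr⟩ := hh.exists_fork s t
  have hle := hs r hr
  have hzero (τ : I) (hτ : h r + timeCost α (α τ) (α r) ≤ h s) : α τ = α r :=
    eq_of_timeCost_eq_zero α.continuous
      (le_antisymm (by linarith) (timeCost_nonneg α _ _))
  rw [hzero s (by linarith), hzero t (by linarith)]

end HeightFunctions

section LastBelow

variable {h : I → ℝ} {s t : I} {u : ℝ}

/-- The last parameter in `[0, s]` whose height is at most `u`, where `u` is first raised to
`h 0` if necessary so that there is such a parameter. If `h` is the contour of a tree with root `0`,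
this is the ancestor of `s` at height `u`. -/
noncomputable def lastBelow (h : I → ℝ) (s : I) (u : ℝ) : I :=
  sSup {r | r ≤ s ∧ h r ≤ max (h 0) u}

lemma isGreatest_lastBelow (hh : Continuous h) (s : I) (u : ℝ) :
    IsGreatest {r | r ≤ s ∧ h r ≤ max (h 0) u} (lastBelow h s u) :=
  (isClosed_Iic.inter (isClosed_le hh continuous_const)).isCompact.isGreatest_sSup
    ⟨0, nonneg', le_max_left (h 0) u⟩

lemma lastBelow_le (hh : Continuous h) (s : I) (u : ℝ) : lastBelow h s u ≤ s :=
  (isGreatest_lastBelow hh s u).1.1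

lemma le_lastBelow (hh : Continuous h) (hts : t ≤ s) (ht : h t ≤ max (h 0) u) :
    t ≤ lastBelow h s u :=
  (isGreatest_lastBelow hh s u).2 ⟨hts, ht⟩

lemma lastBelow_eq_self (hh : Continuous h) (hs : h s ≤ max (h 0) u) : lastBelow h s u = s :=
  (lastBelow_le hh s u).antisymm (le_lastBelow hh le_rfl hs)

lemma apply_lastBelow (hh : Continuous h) (s : I) (u : ℝ) :
    h (lastBelow h s u) = min (h s) (max (h 0) u) := by
  rcases le_total (h s) (max (h 0) u) with hs | hs
  · rw [lastBelow_eq_self hh hs, min_eq_left hs]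
  · have hle := (isGreatest_lastBelow hh s u).1.2
    obtain ⟨x, hx, hxu⟩ := intermediate_value_Icc (lastBelow_le hh s u) hh.continuousOn ⟨hle, hs⟩
    rw [min_eq_right hs, ← (le_lastBelow hh hx.2 hxu.le).antisymm hx.1, hxu]

lemma apply_lastBelow_le (hh : Continuous h) (ht : t ∈ Icc (lastBelow h s u) s) :
    h (lastBelow h s u) ≤ h t := by
  by_contra! hlt
  have hle := le_lastBelow hh ht.2 (hlt.le.trans (isGreatest_lastBelow hh s u).1.2)
  rw [hle.antisymm ht.1] at hlt
  exact hlt.false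

lemma lastBelow_congr (hh : Continuous h) (hts : t ≤ s) (hle : lastBelow h s u ≤ t) :
    lastBelow h s u = lastBelow h t u :=
  (le_lastBelow hh hle (isGreatest_lastBelow hh s u).1.2).antisymm
    (le_lastBelow hh ((lastBelow_le hh t u).trans hts) (isGreatest_lastBelow hh t u).1.2)

lemma lastBelow_mono_right (hh : Continuous h) (s : I) : Monotone (lastBelow h s) :=
  fun _ _ huv => le_lastBelow hh (lastBelow_le hh s _)
    ((isGreatest_lastBelow hh s _).1.2.trans (max_le_max le_rfl huv))

lemma strictMono_of_forall_not_plateau (hh : Continuous h) (h0 : ∀ t, h 0 ≤ h t)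
    (hplateau : ∀ s t, s < t → h s = h t → ∃ r ∈ Icc s t, h r < h s) : StrictMono h := by
  intro s t hst
  by_contra! hle
  obtain ⟨m, hm, hmin⟩ := isCompact_Icc.exists_isMinOn (nonempty_Icc.2 hst.le) hh.continuousOn
  have hms : h m ≤ h s := hmin (left_mem_Icc.2 hst.le)
  have hmt : h m ≤ h t := hmin (right_mem_Icc.2 hst.le)
  have hs := apply_lastBelow hh s (h m)
  have ht := apply_lastBelow hh t (h m)
  rw [max_eq_right (h0 m), min_eq_right hms] at hs
  rw [max_eq_right (h0 m), min_eq_right hmt] at ht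
  have hmw : m ≤ lastBelow h t (h m) := le_lastBelow hh hm.2 (le_max_right _ _)
  have hsw : s < lastBelow h t (h m) := by
    refine (hm.1.trans hmw).lt_of_ne fun heq => hst.ne ?_
    rw [← heq] at ht
    rw [heq, lastBelow_eq_self hh]
    exact (hle.trans_eq ht).trans (le_max_right _ _)
  obtain ⟨r, hr, hlt⟩ := hplateau _ _ ((lastBelow_le hh s (h m)).trans_lt hsw) (hs.trans ht.symm)
  rcases le_total r s with hrs | hsr
  · exact hlt.not_ge (apply_lastBelow_le hh ⟨hr.1, hrs⟩)
  · exact hlt.not_ge (hs.trans_le (hmin ⟨hsr, hr.2.trans (lastBelow_le hh t _)⟩))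

end LastBelow

section Contours

variable {X : Type*} [TopologicalSpace X] {f : I → X} {h : I → ℝ} {s t : I}

/-- The map `f` factors through the rooted tree with contour function `h`, in which two parameters
are identified if they have the same height and no parameter between them has a smaller one. -/
structure FactorsThroughContour (f : I → X) (h : I → ℝ) : Prop where
  continuous : Continuous f
  continuous_height : Continuous h
  height_zero_le : ∀ t, h 0 ≤ h t
  apply_eq : ∀ s t, (∀ r ∈ uIcc s t, h s ≤ h r) → h s = h t → f s = f t

lemma FactorsThroughContour.comp (hf : FactorsThroughContour f h) {e : I → I} (he : Continuous e)
    (h0 : ∀ t, h (e 0) ≤ h t) : FactorsThroughContour (f ∘ e) (h ∘ e) where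
  continuous := hf.continuous.comp he
  continuous_height := hf.continuous_height.comp he
  height_zero_le _ := h0 _
  apply_eq s t hmin hst := hf.apply_eq _ _ (fun _ hx => by
    obtain ⟨r, hr, rfl⟩ := intermediate_value_uIcc he.continuousOn hx
    exact hmin r hr) hst

lemma FactorsThroughContour.continuous_apply_lastBelow (hf : FactorsThroughContour f h) :
    Continuous fun p : I × ℝ => f (lastBelow h p.1 p.2) := by
  have hh := hf.continuous_height
  refine continuous_iff_ultrafilter.2 fun ⟨s, u⟩ U hU => ?_
  obtain ⟨r, -, hr⟩ := isCompact_univ.ultrafilter_le_nhds'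
    (U.map fun p : I × ℝ => lastBelow h p.1 p.2) univ_mem
  replace hr : Tendsto (fun p : I × ℝ => lastBelow h p.1 p.2) U (𝓝 r) := hr
  have hs : Tendsto Prod.fst U (𝓝 s) := (continuous_fst.tendsto (s, u)).mono_left hU
  have hu : Tendsto Prod.snd U (𝓝 u) := (continuous_snd.tendsto (s, u)).mono_left hU
  have hrs : r ≤ s := le_of_tendsto_of_tendsto' hr hs fun p => lastBelow_le hh _ _
  have hheight : h r = h (lastBelow h s u) := by
    rw [apply_lastBelow hh]
    refine tendsto_nhds_unique ((hh.tendsto r).comp hr) ?_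
    simp only [Function.comp_def, apply_lastBelow hh]
    exact ((hh.tendsto s).comp hs).min (tendsto_const_nhds.max hu)
  have hmin (x : I) (hx : x ∈ Ioo r s) : h r ≤ h x := by
    refine le_of_tendsto ((hh.tendsto r).comp hr) ?_
    filter_upwards [hr.eventually_lt_const hx.1, hs.eventually_const_lt hx.2] with p hrx hxs
    exact apply_lastBelow_le hh ⟨hrx.le, hxs.le⟩
  have hrl : r ≤ lastBelow h s u :=
    le_lastBelow hh hrs (hheight.trans_le (isGreatest_lastBelow hh s u).1.2)
  have heq : f r = f (lastBelow h s u) := hf.apply_eq _ _ (fun x hx => by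
    rw [uIcc_of_le hrl] at hx
    rcases hx.1.eq_or_lt with rfl | hrx
    · exact le_rfl
    rcases hx.2.eq_or_lt with rfl | hxl
    · exact hheight.le
    exact hmin x ⟨hrx, hxl.trans_le (lastBelow_le hh s u)⟩) hheight
  exact heq ▸ (hf.continuous.tendsto r).comp hr

lemma FactorsThroughContour.apply_lastBelow_eq (hf : FactorsThroughContour f h) (hst : s ≤ t)
    (hmin : ∀ r ∈ Icc s t, h s ≤ h r) : f (lastBelow h t (h s)) = f s := by
  have hh := hf.continuous_height
  have hle : s ≤ lastBelow h t (h s) := le_lastBelow hh hst (le_max_right _ _)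
  refine (hf.apply_eq _ _ (fun r hr => ?_) ?_).symm
  · rw [uIcc_of_le hle] at hr
    exact hmin r ⟨hr.1, hr.2.trans (lastBelow_le hh _ _)⟩
  · rw [apply_lastBelow hh, max_eq_right (hf.height_zero_le s),
      min_eq_right (hmin t (right_mem_Icc.2 hst))]

lemma homotopic_trans_of_forall_apply_eq {a b c : X} {γ : Path a b} (hγ : ∀ t, γ t = a)
    (δ : Path b c) : (γ.trans δ).Homotopic (δ.cast (by rw [← hγ 1, γ.target]) rfl) := by
  obtain rfl : a = b := by rw [← hγ 1, γ.target]
  obtain rfl : γ = Path.refl a := Path.ext (funext hγ)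
  exact ⟨Path.Homotopy.reflTrans δ⟩

lemma homotopic_map_of_forall_apply_eq {D : Type*} [TopologicalSpace D] [SimplyConnectedSpace D]
    {F : D → X} (hF : Continuous F) {p q r : D} (P : Path p r) {Q : Path p q} (R : Path q r)
    (hQ : ∀ u, F (Q u) = F p) :
    (P.map hF).Homotopic ((R.map hF).cast (by rw [← hQ 1, Q.target]) rfl) := by
  refine ((SimplyConnectedSpace.paths_homotopic P (Q.trans R)).map ⟨F, hF⟩).trans ?_
  rw [Path.map_trans]
  exact homotopic_trans_of_forall_apply_eq hQ _

lemma contractibleSpace_unitInterval : ContractibleSpace I :=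
  (convex_Icc (0 : ℝ) 1).contractibleSpace ⟨0, by simp⟩

-- The strip `I × ℝ` maps to the tree by sending `(r, u)` to the ancestor of `r` at height `u`.
-- Both paths lift to it: one to the graph of `h`, the other to a vertical segment, and the
-- horizontal segment joining their starting points is sent to a single point.
lemma FactorsThroughContour.exists_homotopic_climb {a b : X} {α : Path a b}
    (hα : FactorsThroughContour α h) (hst : s ≤ t) (hmin : ∀ r ∈ Icc s t, h s ≤ h r) :
    ∃ δ : Path (α s) (α t),
      (∀ u : I, δ u = α (lastBelow h t (AffineMap.lineMap (h s) (h t) (u : ℝ)))) ∧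
        (α.subpath s t).Homotopic δ := by
  have := contractibleSpace_unitInterval
  have hh := hα.continuous_height
  let F : I × ℝ → X := fun p => α (lastBelow h p.1 p.2)
  have hF : Continuous F := hα.continuous_apply_lastBelow
  have hF_graph (r : I) : F (r, h r) = α r := congrArg α (lastBelow_eq_self hh (le_max_right _ _))
  let segment : Path s t :=
    ⟨⟨Icc.convexComb s t, Icc.continuous_convexComb s t⟩, by simp, by simp⟩
  let ascent : Path (h s) (h t) :=
    ⟨⟨fun u => AffineMap.lineMap (h s) (h t) (u : ℝ), by fun_prop⟩, by simp, by simp⟩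
  let graph := segment.prod (segment.map hh)
  let base := segment.prod (Path.refl (h s))
  let climb := (Path.refl t).prod ascent
  have hbase (u : I) : F (base u) = F (s, h s) := by
    have hle : s ≤ segment u := Icc.le_convexComb hst u
    have hle' : segment u ≤ t := Icc.convexComb_le hst u
    rw [hF_graph]
    exact hα.apply_lastBelow_eq hle fun r hr => hmin r ⟨hr.1, hr.2.trans hle'⟩
  have hbase_one : F (t, h s) = F (s, h s) := by simpa using hbase 1
  refine ⟨(climb.map hF).cast ((hF_graph s).symm.trans hbase_one.symm) (hF_graph t).symm,
    fun u => rfl, ?_⟩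
  have hsubpath : α.subpath s t = (graph.map hF).cast (hF_graph s).symm (hF_graph t).symm :=
    Path.ext (funext fun u => (hF_graph (segment u)).symm)
  rw [hsubpath]
  exact homotopic_map_of_forall_apply_eq hF graph climb hbase

end Contours

section NullhomotopicLoops

variable {X : Type*} [TopologicalSpace X] {a b : X} {γ : Path a b}

lemma IsNullhomotopicLoop.of_homotopic (hγ : IsNullhomotopicLoop γ) {γ' : Path a b}
    (h : γ.Homotopic γ') : IsNullhomotopicLoop γ' :=
  ⟨hγ.1, (h.symm.pathCast hγ.1 rfl).trans hγ.2⟩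

lemma IsNullhomotopicLoop.of_forall_eq (hγ : IsNullhomotopicLoop γ) {a' b' : X} {γ' : Path a' b'}
    (h : ∀ t, γ' t = γ t) : IsNullhomotopicLoop γ' := by
  obtain rfl : a' = a := by simpa using h 0
  obtain rfl : b' = b := by simpa using h 1
  exact Path.ext (funext h) ▸ hγ

lemma isNullhomotopicLoop_refl (a : X) : IsNullhomotopicLoop (Path.refl a) := ⟨rfl, .refl _⟩

lemma isNullhomotopicLoop_trans_symm {γ' : Path a b} (h : γ.Homotopic γ') :
    IsNullhomotopicLoop (γ.trans γ'.symm) :=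
  (isNullhomotopicLoop_refl a).of_homotopic
    (.trans ⟨Path.Homotopy.reflTransSymm γ⟩ (.hcomp (.refl γ) h.symm₂))

lemma IsNullhomotopicLoop.subpath_zero_one (hγ : IsNullhomotopicLoop γ) :
    IsNullhomotopicLoop (γ.subpath 0 1) :=
  hγ.of_forall_eq fun t => by simp [Path.subpath_zero_one]

lemma homotopic_map_of_path_unitInterval {s t : I} (P Q : Path s t) :
    (P.map γ.continuous).Homotopic (Q.map γ.continuous) := by
  have := contractibleSpace_unitInterval
  exact (SimplyConnectedSpace.paths_homotopic P Q).map γ.toContinuousMap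

lemma isNullhomotopicLoop_truncate_iff {s t : I} (hst : s ≤ t) :
    IsNullhomotopicLoop (γ.truncate s t) ↔ IsNullhomotopicLoop (γ.subpath s t) := by
  let segment : Path s t :=
    ⟨⟨Icc.convexComb s t, Icc.continuous_convexComb s t⟩, by simp, by simp⟩
  let clamp : Path s t :=
    ⟨⟨fun u => min (max u s) t, by fun_prop⟩, by simp [hst], by simp [le_one']⟩
  have hclamp (u : I) : γ.truncate s t u = clamp.map γ.continuous u :=
    γ.extend_extends' (clamp u)
  have hhom : (clamp.map γ.continuous).Homotopic (γ.subpath s t) :=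
    homotopic_map_of_path_unitInterval clamp segment
  exact ⟨fun h => (h.of_forall_eq fun u => (hclamp u).symm).of_homotopic hhom,
    fun h => (h.of_homotopic hhom.symm).of_forall_eq hclamp⟩

lemma isReducedPath_iff : IsReducedPath γ ↔
    (∀ t, γ t = a) ∨ ∀ s t, s < t → ¬ IsNullhomotopicLoop (γ.subpath s t) := by
  refine or_congr_right (not_iff_comm.1 ?_)
  push Not
  constructor
  · rintro ⟨s, t, hst, hnull⟩
    obtain ⟨_, hγ⟩ := (isNullhomotopicLoop_truncate_iff hst.le).2 hnull
    refine ⟨s, t, hst, s.2.1, t.2.2, ?_, hγ⟩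
    simpa using hnull.1.symm
  · rintro ⟨s, t, hst, hs, ht, heq, hγ⟩
    refine ⟨⟨s, hs, hst.le.trans ht⟩, ⟨t, hs.trans hst.le, ht⟩, hst, ?_⟩
    exact (isNullhomotopicLoop_truncate_iff (Subtype.mk_le_mk.2 hst.le)).1 ⟨_, hγ⟩

end NullhomotopicLoops

section ReducedPaths

variable {X : Type*} [TopologicalSpace X] {a b : X} {α : Path a b} {h : I → ℝ}

lemma FactorsThroughContour.isNullhomotopicLoop_subpath (hα : FactorsThroughContour α h) {s t : I}
    (hst : s ≤ t) (hheight : h s = h t) (hmin : ∀ r ∈ Icc s t, h s ≤ h r) :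
    IsNullhomotopicLoop (α.subpath s t) := by
  obtain ⟨δ, hδ, hαδ⟩ := hα.exists_homotopic_climb hst hmin
  refine IsNullhomotopicLoop.of_homotopic ?_ hαδ.symm
  refine (isNullhomotopicLoop_refl (α s)).of_forall_eq fun u => ?_
  rw [hδ, ← hheight, AffineMap.lineMap_same_apply, hα.apply_lastBelow_eq hst hmin, Path.refl_apply]

lemma FactorsThroughContour.strictMono (hα : FactorsThroughContour α h)
    (hred : ∀ s t, s < t → ¬ IsNullhomotopicLoop (α.subpath s t)) : StrictMono h :=
  strictMono_of_forall_not_plateau hα.continuous_height hα.height_zero_le fun s t hst heq => by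
    by_contra! hmin
    exact hred s t hst (hα.isNullhomotopicLoop_subpath hst.le heq hmin)

lemma FactorsThroughContour.apply_zero_eq_apply_one (hα : FactorsThroughContour α h)
    (hnull : ∀ s t, IsNullhomotopicLoop (α.subpath s t) → h s = h t) {β : Path a b}
    (hβ : ∀ u : I, β u = α (lastBelow h 1 (AffineMap.lineMap (h 0) (h 1) (u : ℝ)))) {s t : I}
    (hst : s < t) (hloop : IsNullhomotopicLoop (β.subpath s t)) : h 0 = h 1 := by
  have hh := hα.continuous_height
  let v (u : I) : ℝ := AffineMap.lineMap (h 0) (h 1) (u : ℝ)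
  have hv : Monotone v := fun _ _ huu' => AffineMap.lineMap_mono (hα.height_zero_le 1) huu'
  have hheight (u : I) : h (lastBelow h 1 (v u)) = v u := by
    have h0 : h 0 ≤ v u := by simpa [v] using hv (nonneg' : 0 ≤ u)
    have h1 : v u ≤ h 1 := by simpa [v] using hv (le_one' : u ≤ 1)
    rw [apply_lastBelow hh, max_eq_right h0, min_eq_right h1]
  have hmono (u u' : I) (huu' : u ≤ u') : lastBelow h 1 (v u) ≤ lastBelow h 1 (v u') :=
    lastBelow_mono_right hh 1 (hv huu')
  obtain ⟨δ, hδ, hαδ⟩ := hα.exists_homotopic_climb (hmono s t hst.le)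
    fun r hr => apply_lastBelow_le hh ⟨hr.1, le_one'⟩
  have hδβ (u : I) : δ u = β.subpath s t u := by
    have hv_comb : AffineMap.lineMap (v s) (v t) (u : ℝ) = v (Icc.convexComb s t u) := by
      simp [v, AffineMap.lineMap_apply]
      ring
    change _ = β (Icc.convexComb s t u)
    rw [hδ, hβ, hheight, hheight, hv_comb,
      lastBelow_congr hh le_one' (hmono _ t (Icc.convexComb_le hst.le u))]
  have heq := hnull _ _ ((hloop.of_forall_eq hδβ).of_homotopic hαδ.symm)
  rw [hheight, hheight] at heq
  by_contra hne
  exact hst.ne (Subtype.ext (AffineMap.lineMap_injective ℝ hne heq))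

lemma FactorsThroughContour.exists_isReducedPath (hα : FactorsThroughContour α h)
    (hnull : ∀ s t, IsNullhomotopicLoop (α.subpath s t) → h s = h t) :
    ∃ β : Path a b, α.Homotopic β ∧ IsReducedPath β ∧ range β ⊆ range α := by
  obtain ⟨δ, hδ, hαδ⟩ := hα.exists_homotopic_climb zero_le_one fun r _ => hα.height_zero_le r
  rw [Path.subpath_zero_one] at hαδ
  refine ⟨δ.cast α.source.symm α.target.symm, hαδ.pathCast _ _, isReducedPath_iff.2 ?_, ?_⟩
  · rcases (hα.height_zero_le 1).eq_or_lt with heq | hlt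
    · refine .inl fun t => ?_
      rw [Path.cast_coe, hδ, ← heq, AffineMap.lineMap_same_apply,
        hα.apply_lastBelow_eq zero_le_one fun r _ => hα.height_zero_le r, α.source]
    refine .inr fun s t hst hloop => ?_
    exact hlt.ne (hα.apply_zero_eq_apply_one hnull hδ hst hloop)
  · rintro _ ⟨t, rfl⟩
    exact ⟨_, (hδ t).symm⟩

end ReducedPaths

section Reparametrization

lemma exists_orderIso_comp_eq_of_range_eq {A B C : Type*} [LinearOrder A] [LinearOrder B]
    [Preorder C] {g : A → C} {g' : B → C} (hg : StrictMono g) (hg' : StrictMono g')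
    (hrange : range g' = range g) : ∃ φ : B ≃o A, ∀ t, g (φ t) = g' t := by
  choose φ hφ using fun t => hrange.le (mem_range_self t)
  have hmono : StrictMono φ := fun s t hst => hg.lt_iff_lt.1 (by simpa only [hφ] using hg' hst)
  refine ⟨hmono.orderIsoOfSurjective φ fun r => ?_, hφ⟩
  obtain ⟨t, ht⟩ := hrange.ge (mem_range_self r)
  exact ⟨t, hg.injective ((hφ t).trans ht)⟩

lemma range_eq_Icc_of_monotone {g : I → ℝ} (hg : Continuous g) (hmono : Monotone g) :
    range g = Icc (g 0) (g 1) := by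
  refine Subset.antisymm ?_ (intermediate_value_univ 0 1 hg)
  rintro _ ⟨t, rfl⟩
  exact ⟨hmono nonneg', hmono le_one'⟩

variable {X : Type*} [TopologicalSpace X]

lemma FactorsThroughContour.exists_orderIso_comp_eq {f : I → X} {h : I → ℝ}
    (hf : FactorsThroughContour f h) {e e' : I → I} (he : Continuous e) (he' : Continuous e')
    (hmono : StrictMono (h ∘ e)) (hmono' : StrictMono (h ∘ e')) (h0 : h (e 0) = h (e' 0))
    (h1 : e 1 = e' 1) : ∃ φ : I ≃o I, ∀ t, f (e' t) = f (e (φ t)) := by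
  have hh := hf.continuous_height
  have hrange : range (h ∘ e') = range (h ∘ e) := by
    rw [range_eq_Icc_of_monotone (hh.comp he) hmono.monotone,
      range_eq_Icc_of_monotone (hh.comp he') hmono'.monotone]
    simp only [Function.comp_apply, h0, h1]
  obtain ⟨φ, hφ⟩ := exists_orderIso_comp_eq_of_range_eq hmono hmono' hrange
  have hle {e : I → I} (he : Continuous e) (hmono : Monotone (h ∘ e)) (t : I) :
      ∀ r ∈ uIcc (e t) (e 1), h (e t) ≤ h r := by
    intro r hr
    obtain ⟨τ, hτ, rfl⟩ := intermediate_value_uIcc he.continuousOn hr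
    rw [uIcc_of_le le_one'] at hτ
    exact hmono hτ.1
  refine ⟨φ, fun t => (hf.apply_eq _ _ (fun r hr => ?_) (hφ t)).symm⟩
  rcases uIcc_subset_uIcc_union_uIcc (b := e 1) hr with hr | hr
  · exact hle he hmono.monotone (φ t) r hr
  · rw [h1, uIcc_comm] at hr
    exact (hφ t).trans_le (hle he' hmono'.monotone t r hr)

variable {a b : X} {β β' : Path a b}

lemma exists_trans_symm_apply_eq (β β' : Path a b) :
    ∃ e e' : I → I, Continuous e ∧ Continuous e' ∧ e 0 = 0 ∧ e' 0 = 1 ∧ e 1 = e' 1 ∧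
      (∀ t, β.trans β'.symm (e t) = β t) ∧ ∀ t, β.trans β'.symm (e' t) = β' t := by
  let half : I := ⟨1 / 2, by norm_num⟩
  refine ⟨Icc.convexComb 0 half, Icc.convexComb 1 half, Icc.continuous_convexComb _ _,
    Icc.continuous_convexComb _ _, by simp, by simp, by simp, fun t => ?_, fun t => ?_⟩
  · have hle : (Icc.convexComb 0 half t : ℝ) ≤ 1 / 2 := Icc.convexComb_le nonneg' t
    have heq : 2 * (Icc.convexComb 0 half t : ℝ) = t := by
      simp [half]
      ring
    rw [← Path.extend_extends', Path.extend_trans_of_le_half _ _ hle, heq, Path.extend_extends']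
  · have heq : 1 - (2 * (Icc.convexComb 1 half t : ℝ) - 1) = t := by
      simp [half]
      ring
    have hle : 1 / 2 ≤ (Icc.convexComb 1 half t : ℝ) := by linarith [t.2.2]
    rw [← Path.extend_extends', Path.extend_trans_of_half_le _ _ hle, Path.extend_symm_apply, heq,
      Path.extend_extends']

lemma FactorsThroughContour.exists_orderIso_of_trans_symm {h : I → ℝ}
    (hh : FactorsThroughContour (β.trans β'.symm) h) (h01 : h 0 = h 1)
    (hβ : ∀ s t, s < t → ¬ IsNullhomotopicLoop (β.subpath s t))
    (hβ' : ∀ s t, s < t → ¬ IsNullhomotopicLoop (β'.subpath s t)) :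
    ∃ φ : I ≃o I, ∀ t, β' t = β (φ t) := by
  obtain ⟨e, e', he, he', he0, he'0, he1, hβe, hβe'⟩ := exists_trans_symm_apply_eq β β'
  have hcomp := hh.comp he (by simpa only [he0] using hh.height_zero_le)
  have hcomp' := hh.comp he' (by simpa only [he'0, ← h01] using hh.height_zero_le)
  rw [Function.comp_def, funext hβe] at hcomp
  rw [Function.comp_def, funext hβe'] at hcomp'
  obtain ⟨φ, hφ⟩ := hh.exists_orderIso_comp_eq he he' (hcomp.strictMono hβ)
    (hcomp'.strictMono hβ') (by rw [he0, he'0, h01]) he1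
  exact ⟨φ, fun t => by simpa only [hβe, hβe'] using hφ t⟩

lemma IsReducedPath.forall_apply_eq (hβ' : IsReducedPath β') (hβ : ∀ t, β t = a)
    (hhom : β.Homotopic β') (t : I) : β' t = a := by
  rcases isReducedPath_iff.1 hβ' with hconst | hred
  · exact hconst t
  · have hnull : IsNullhomotopicLoop β' :=
      ((isNullhomotopicLoop_refl a).of_forall_eq hβ).of_homotopic hhom
    exact (hred 0 1 zero_lt_one hnull.subpath_zero_one).elim

end Reparametrization

section OneDimensional

variable {X : Type*} [MetricSpace X] {a b : X}

lemma IsApproxHeight.factorsThroughContour {α : Path a b} {h : I → ℝ}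
    (hh : IsApproxHeight α 0 h) : FactorsThroughContour α h where
  continuous := α.continuous
  continuous_height := hh.continuous
  height_zero_le t := hh.map_zero.trans_le (hh.nonneg t)
  apply_eq _ _ := hh.apply_eq

lemma exists_orderIso_of_isReducedPath (hdim : CovDimLE X 1) {β β' : Path a b}
    (hhom : β.Homotopic β') (hβ : IsReducedPath β) (hβ' : IsReducedPath β') :
    ∃ φ : I ≃o I, ∀ t, β' t = β (φ t) := by
  rcases isReducedPath_iff.1 hβ with hconst | hred
  · exact ⟨.refl I, fun t => (hβ'.forall_apply_eq hconst hhom t).trans (hconst t).symm⟩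
  rcases isReducedPath_iff.1 hβ' with hconst' | hred'
  · exact ⟨.refl I, fun t => (hconst' t).trans (hβ.forall_apply_eq hconst' hhom.symm t).symm⟩
  obtain ⟨h, hh⟩ := exists_isApproxHeight_zero hdim (β.trans β'.symm)
  have hloop := (isNullhomotopicLoop_trans_symm hhom).subpath_zero_one
  exact hh.factorsThroughContour.exists_orderIso_of_trans_symm
    (hh.eq_of_nullhomotopic 0 1 hloop) hred hred'

end OneDimensional

/-- In a one-dimensional metric space every path is homotopic rel endpoints to a reduced
path inside its image, uniquely up to orientation preserving reparametrization. -/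
theorem stmt_10 {X : Type} [MetricSpace X] (hdim : CovDimLE X 1)
    {a b : X} (α : Path a b) :
    ∃ β : Path a b, α.Homotopic β ∧ IsReducedPath β ∧
      (Set.range fun t => β t) ⊆ (Set.range fun t => α t) ∧
      ∀ β' : Path a b, α.Homotopic β' → IsReducedPath β' →
        ∃ φ : unitInterval ≃ₜ unitInterval, StrictMono (fun t => φ t) ∧
          ∀ t, β' t = β (φ t) := by
  obtain ⟨h, hh⟩ := exists_isApproxHeight_zero hdim α
  obtain ⟨β, hαβ, hβ, hrange⟩ :=
    hh.factorsThroughContour.exists_isReducedPath hh.eq_of_nullhomotopic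
  refine ⟨β, hαβ, hβ, hrange, fun β' hαβ' hβ' => ?_⟩
  obtain ⟨φ, hφ⟩ := exists_orderIso_of_isReducedPath hdim (hαβ.symm.trans hαβ') hβ hβ'
  exact ⟨φ.toHomeomorph, φ.strictMono, hφ⟩
end
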